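/- Let n ≥ 8 and m ≥ 2, and let Aut(F_n, m) be the level m congruence subgroup of Aut(F_n), namely the kernel of the composite homomorphism Aut(F_n) → Aut(ℤ^n) → Aut((ℤ/mℤ)^n) given by the action on the abelianization of F_n reduced modulo m. Then any orientation preserving C^1 action of Aut(F_n, m) on the circle cannot be faithful; that is, every group homomorphism Aut(F_n, m) → Diff^1_+(S^1) has nontrivial kernel. -/

import Mathlib

noncomputable section

open MeasureTheory

/-- The circle `S¹ = ℝ/ℤ`. -/
abbrev 𝕊 : Type := AddCircle (1 : ℝ)

/-- `F : ℝ → ℝ` is a lift of the circle bijection `f` witnessing that `f` is an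
orientation preserving homeomorphism of the circle: `F` is a strictly increasing
homeomorphism of `ℝ` (equivalently, continuous and strictly increasing) satisfying
`F (x + 1) = F x + 1`, and projecting to `f`. -/
def IsOPLift (f : Equiv.Perm 𝕊) (F : ℝ → ℝ) : Prop :=
  Continuous F ∧ StrictMono F ∧ (∀ x : ℝ, F (x + 1) = F x + 1) ∧
    ∀ x : ℝ, f (x : 𝕊) = (F x : 𝕊)

/-- `f` is an orientation preserving homeomorphism of the circle. -/
def IsOPHomeo (f : Equiv.Perm 𝕊) : Prop := ∃ F : ℝ → ℝ, IsOPLift f F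

/-- `F` is a lift witnessing that `f` is an orientation preserving `C¹` diffeomorphism
of the circle: an orientation preserving lift which is `C¹` with nowhere vanishing
derivative. -/
def IsC1Lift (f : Equiv.Perm 𝕊) (F : ℝ → ℝ) : Prop :=
  IsOPLift f F ∧ ContDiff ℝ 1 F ∧ ∀ x : ℝ, deriv F x ≠ 0

/-- `f` is an orientation preserving `C¹` diffeomorphism of the circle, i.e. an element
of `Diff¹₊(S¹)`. -/
def IsC1Diffeo (f : Equiv.Perm 𝕊) : Prop := ∃ F : ℝ → ℝ, IsC1Lift f F

/-- The free group of rank `n`. -/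
abbrev FreeGrp (n : ℕ) : Type := FreeGroup (Fin n)

/-- The automorphism group `Aut(Fₙ)`. -/
abbrev AutF (n : ℕ) : Type := MulAut (FreeGrp n)

/-- The subgroup `IAₙ ≤ Aut(Fₙ)` of automorphisms acting trivially on the abelianization
`Fₙ^{ab} ≅ ℤⁿ`, i.e. the kernel of the natural map `Aut(Fₙ) → Aut(ℤⁿ)`. -/
def IA (n : ℕ) : Subgroup (AutF n) where
  carrier := {e | ∀ x : FreeGrp n, Abelianization.of (e x) = Abelianization.of x}
  one_mem' := fun _ => rfl
  mul_mem' := by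
    intro a b ha hb x
    have h : (a * b) x = a (b x) := rfl
    rw [h, ha (b x), hb x]
  inv_mem' := by
    intro a ha x
    have h := ha (a⁻¹ x)
    have h' : a (a⁻¹ x) = x := a.apply_symm_apply x
    rw [h'] at h
    exact h.symm

/-- The canonical projection `Fₙ → (ℤ/mℤ)ⁿ` (target written multiplicatively): the
abelianization map `Fₙ → ℤⁿ` followed by reduction modulo `m`; it sends the `i`-th free
generator to the `i`-th standard basis vector. -/
def modMProj (n m : ℕ) : FreeGrp n →* Multiplicative (Fin n → ZMod m) :=
  FreeGroup.lift fun i => Multiplicative.ofAdd (Pi.single i 1)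

/-- The level `m` congruence subgroup `Aut(Fₙ, m)`: the kernel of the composite
`Aut(Fₙ) → Aut(ℤⁿ) → Aut((ℤ/mℤ)ⁿ)` given by the action on the abelianization of `Fₙ`
reduced modulo `m`; equivalently, the automorphisms `e` with `π ∘ e = π` where
`π : Fₙ → (ℤ/mℤ)ⁿ` is the canonical projection. -/
def AutCongr (n m : ℕ) : Subgroup (AutF n) where
  carrier := {e | ∀ x : FreeGrp n, modMProj n m (e x) = modMProj n m x}
  one_mem' := fun _ => rfl
  mul_mem' := by
    intro a b ha hb x
    have h : (a * b) x = a (b x) := rfl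
    rw [h, ha (b x), hb x]
  inv_mem' := by
    intro a ha x
    have h := ha (a⁻¹ x)
    have h' : a (a⁻¹ x) = x := a.apply_symm_apply x
    rw [h'] at h
    exact h.symm

/-!
Let `E` be the normal subgroup of `Aut(F₄)` generated by partial conjugations and by the
transvections `x ↦ x w` with `w` trivial in `(ℤ/m)⁴`. Letting `Aut(F₄)` act on two disjoint blocks
of four letters embeds two commuting copies of `E` in `Aut(Fₙ, m)`.

Of two commuting groups of circle homeomorphisms, lifted to the line, one preserves a nonempty set
on which it acts freely modulo the kernel of the action; on that group the translation number is
additive by Hölder's argument. The normal generators of `E` have rotation numbers of order dividing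
`m²`: a transvection `t` satisfies a relation `b a b⁻¹ = t₁ ⋯ tₘ a` with conjugates `tᵢ` of `t`, and
the `m`-th power of a partial conjugation is a product of two commuting transvections. So in one of
the two copies the rotation number is a character `χ : E → ℤ/m²`, and `ker χ` fixes a point of the
circle.

On a suitable group of transvections by elements of a deeper congruence kernel, `ker χ` restricts to
a nontrivial finitely generated group without nontrivial homomorphisms to `ℝ`. By Thurston's
stability theorem a `C¹` action of such a group with a fixed point is trivial.
-/

open Filter Topology Asymptotics

/-! ### Thurston stability on the line -/

section AsymptoticallyAdditive

variable {Γ α : Type*} [Group Γ] {l : Filter α} {D : Γ → α → ℝ}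

lemma isBigO_one_of_closure_eq_top (hD : ∀ g h, (fun x ↦ D (g * h) x - D g x - D h x) =o[l] D h)
    (hone : D 1 = 0) {S : Set Γ} (hS : Subgroup.closure S = ⊤)
    (hb : ∀ s ∈ S, D s =O[l] fun _ ↦ (1 : ℝ)) (g : Γ) : D g =O[l] fun _ ↦ (1 : ℝ) := by
  have hg : g ∈ Subgroup.closure S := hS ▸ Subgroup.mem_top g
  induction hg using Subgroup.closure_induction with
  | mem s hs => exact hb s hs
  | one => exact hone ▸ isBigO_zero _ _
  | mul a b _ _ ha hb =>
    refine (((hD a b).isBigO.trans hb).add (ha.add hb)).congr_left fun x ↦ ?_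
    ring
  | inv a _ ha =>
    have h := ((hD a⁻¹ a).isBigO.trans ha).add ha
    rw [inv_mul_cancel, hone] at h
    refine h.neg_left.congr_left fun x ↦ ?_
    simp only [Pi.zero_apply]
    ring

lemma exists_tendsto_of_isBigO_one {U : Ultrafilter α} {f : α → ℝ}
    (hf : f =O[(U : Filter α)] fun _ ↦ (1 : ℝ)) : ∃ c, Tendsto f U (𝓝 c) := by
  obtain ⟨C, hC⟩ := hf.bound
  have hmem : ∀ᶠ x in U, f x ∈ Set.Icc (-C) C := by
    filter_upwards [hC] with x hx
    simpa only [norm_one, mul_one, Real.norm_eq_abs, abs_le, ← Set.mem_Icc] using hx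
  obtain ⟨c, -, hc⟩ := isCompact_Icc.ultrafilter_le_nhds (U.map f) (le_principal_iff.2 hmem)
  exact ⟨c, hc⟩

/- Along an ultrafilter each `D g` has a limit, and this limit is additive in `g`. -/
lemma tendsto_zero_of_isLittleO [Subsingleton (Γ →* Multiplicative ℝ)]
    (hD : ∀ g h, (fun x ↦ D (g * h) x - D g x - D h x) =o[l] D h)
    (hb : ∀ g, D g =O[l] fun _ ↦ (1 : ℝ)) (g : Γ) : Tendsto (D g) l (𝓝 0) := by
  refine tendsto_iff_ultrafilter _ _ _ |>.2 fun U hU ↦ ?_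
  choose c hc using fun g ↦ exists_tendsto_of_isBigO_one ((hb g).mono hU)
  have hadd (g h : Γ) : c (g * h) = c g + c h := by
    have h0 : Tendsto (fun x ↦ D (g * h) x - D g x - D h x) U (𝓝 0) :=
      (isLittleO_one_iff ℝ).1 (((hD g h).trans_isBigO (hb h)).mono hU)
    linarith [tendsto_nhds_unique h0 (((hc (g * h)).sub (hc g)).sub (hc h))]
  let φ : Γ →* Multiplicative ℝ := MonoidHom.mk' (fun g ↦ .ofAdd (c g)) fun g h ↦ by
    rw [hadd, ofAdd_add]
  have hzero : c g = 0 := congrArg Multiplicative.toAdd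
    (DFunLike.congr_fun (Subsingleton.elim φ 1) g)
  exact hzero ▸ hc g

end AsymptoticallyAdditive

namespace ThurstonStability

open MulAction

variable {Γ : Type*} [Group Γ] [MulAction Γ ℝ] {p : ℝ}

lemma hasDerivAt_smul_comp {g h : Γ} (hp : h • p = p) {a b : ℝ}
    (hg : HasDerivAt (g • · : ℝ → ℝ) a p) (hh : HasDerivAt (h • · : ℝ → ℝ) b p) :
    HasDerivAt ((g * h) • · : ℝ → ℝ) (a * b) p := by
  simp only [mul_smul]
  exact HasDerivAt.comp p (h₂ := (g • ·)) (by rwa [hp]) hh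

lemma deriv_smul_eq_one [Subsingleton (Γ →* Multiplicative ℝ)] (hp : p ∈ fixedPoints Γ ℝ)
    (hd : ∀ g : Γ, DifferentiableAt ℝ (g • · : ℝ → ℝ) p) (hm : ∀ g : Γ, Monotone (g • · : ℝ → ℝ))
    (g : Γ) : deriv (g • · : ℝ → ℝ) p = 1 := by
  have hmul (g h : Γ) :
      deriv ((g * h) • · : ℝ → ℝ) p = deriv (g • · : ℝ → ℝ) p * deriv (h • · : ℝ → ℝ) p :=
    (hasDerivAt_smul_comp (hp h) (hd g).hasDerivAt (hd h).hasDerivAt).deriv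
  have hne (g : Γ) : deriv (g • · : ℝ → ℝ) p ≠ 0 := fun h0 ↦ by
    have hone := hmul g⁻¹ g
    simp [h0] at hone
  let φ : Γ →* Multiplicative ℝ :=
    MonoidHom.mk' (fun g ↦ .ofAdd (Real.log (deriv (g • · : ℝ → ℝ) p))) fun g h ↦ by
      rw [hmul, Real.log_mul (hne g) (hne h), ofAdd_add]
  have hlog : Real.log (deriv (g • · : ℝ → ℝ) p) = 0 := congrArg Multiplicative.toAdd
    (DFunLike.congr_fun (Subsingleton.elim φ 1) g)
  have hpos : 0 < deriv (g • · : ℝ → ℝ) p := (hm g).deriv_nonneg.lt_of_ne' (hne g)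
  rcases Real.log_eq_zero.1 hlog with h | h | h
  · exact absurd h (hne g)
  · exact h
  · linarith

lemma displacement_mul_isLittleO {g h : Γ} (hp : h • p = p)
    (hg : HasStrictDerivAt (g • · : ℝ → ℝ) 1 p) (hh : ContinuousAt (h • · : ℝ → ℝ) p) :
    (fun x ↦ ((g * h) • x - x) - (g • x - x) - (h • x - x)) =o[𝓝 p] fun x ↦ h • x - x := by
  have hs : HasStrictDerivAt (fun x ↦ g • x - x) 0 p :=
    sub_self (1 : ℝ) ▸ hg.sub (hasStrictDerivAt_id p)
  have ht : Tendsto (fun x ↦ (h • x, x)) (𝓝 p) (𝓝 (p, p)) := by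
    have hlim : Tendsto (h • ·) (𝓝 p) (𝓝 p) := by simpa only [hp] using hh.tendsto
    exact hlim.prodMk_nhds tendsto_id
  refine (hs.hasStrictFDerivAt.isLittleO.comp_tendsto ht).congr (fun x ↦ ?_) fun x ↦ rfl
  simp only [Function.comp, mul_smul]
  simp
  ring

lemma mem_fixedPoints_of_closure {S : Set Γ} (hS : Subgroup.closure S = ⊤) {x : ℝ}
    (hx : ∀ s ∈ S, s • x = x) : x ∈ fixedPoints Γ ℝ := fun g ↦ by
  have hle : Subgroup.closure S ≤ stabilizer Γ x := (Subgroup.closure_le _).2 hx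
  exact hle (hS ▸ Subgroup.mem_top g)

/- Otherwise divide the displacements `g • x - x` by their sum over a finite generating set. Along
the points near `p` that are moved, the quotients are asymptotically additive in `g`, hence tend
to `0`; but those of the generators sum to `1` in absolute value. -/
theorem eventually_mem_fixedPoints [Group.FG Γ] [Subsingleton (Γ →* Multiplicative ℝ)]
    (hp : p ∈ fixedPoints Γ ℝ) (hd : ∀ g : Γ, HasStrictDerivAt (g • · : ℝ → ℝ) 1 p) :
    ∀ᶠ x in 𝓝 p, x ∈ fixedPoints Γ ℝ := by
  by_contra hev
  obtain ⟨S, hS⟩ := Group.fg_def.1 ‹Group.FG Γ›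
  let l := 𝓝 p ⊓ 𝓟 (fixedPoints Γ ℝ)ᶜ
  have : l.NeBot := frequently_mem_iff_neBot.1 (not_eventually.1 hev)
  let M (x : ℝ) : ℝ := ∑ s ∈ S, |s • x - x|
  have hM : ∀ᶠ x in l, 0 < M x := by
    filter_upwards [mem_inf_of_right (mem_principal_self _)] with x hx
    refine (Finset.sum_nonneg fun _ _ ↦ abs_nonneg _).lt_of_ne' fun hzero ↦ hx ?_
    rw [Finset.sum_eq_zero_iff_of_nonneg fun _ _ ↦ abs_nonneg _] at hzero
    exact mem_fixedPoints_of_closure hS fun s hs ↦ sub_eq_zero.1 (abs_eq_zero.1 (hzero s hs))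
  let D (g : Γ) (x : ℝ) : ℝ := (g • x - x) * (M x)⁻¹
  have hD (g h : Γ) : (fun x ↦ D (g * h) x - D g x - D h x) =o[l] D h :=
    (((displacement_mul_isLittleO (hp h) (hd g) (hd h).hasDerivAt.continuousAt).mono
      inf_le_left).mul_isBigO (isBigO_refl (fun x ↦ (M x)⁻¹) l)).congr
      (fun x ↦ by simp only [D]; ring) fun x ↦ rfl
  have hbdd (s : Γ) (hs : s ∈ (S : Set Γ)) : D s =O[l] fun _ ↦ (1 : ℝ) := by
    refine IsBigO.of_bound 1 ?_
    filter_upwards [hM] with x hx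
    rw [norm_one, mul_one, norm_mul, norm_inv, Real.norm_of_nonneg hx.le, ← div_eq_mul_inv,
      div_le_one hx]
    exact Finset.single_le_sum (f := fun s ↦ |s • x - x|) (fun _ _ ↦ abs_nonneg _) hs
  have hlim := tendsto_zero_of_isLittleO hD
    (isBigO_one_of_closure_eq_top hD (by ext x; simp [D]) hS hbdd)
  have hsum : Tendsto (fun x ↦ ∑ s ∈ S, |D s x|) l (𝓝 0) := by
    simpa only [abs_zero, Finset.sum_const_zero] using tendsto_finsetSum S fun s _ ↦ (hlim s).abs
  refine zero_ne_one (tendsto_nhds_unique hsum (tendsto_const_nhds.congr' ?_))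
  filter_upwards [hM] with x hx
  simp only [D, abs_mul, abs_inv, abs_of_pos hx, ← Finset.sum_mul]
  exact (mul_inv_cancel₀ hx.ne').symm

theorem smul_eq_self [Group.FG Γ] [Subsingleton (Γ →* Multiplicative ℝ)]
    (hC : ∀ g : Γ, ContDiff ℝ 1 (g • · : ℝ → ℝ)) (hm : ∀ g : Γ, Monotone (g • · : ℝ → ℝ))
    (hp : (fixedPoints Γ ℝ).Nonempty) (g : Γ) (x : ℝ) : g • x = x := by
  have hopen : IsOpen (fixedPoints Γ ℝ) := isOpen_iff_mem_nhds.2 fun p hp ↦ by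
    refine eventually_mem_fixedPoints hp fun g ↦ ?_
    have hg := (hC g).contDiffAt.hasStrictDerivAt (x := p) one_ne_zero
    rwa [deriv_smul_eq_one hp (fun g ↦ (hC g).differentiable one_ne_zero p) hm] at hg
  have hclosed : IsClosed (fixedPoints Γ ℝ) := by
    simp only [fixedPoints, Set.ofPred_forall]
    exact isClosed_iInter fun g ↦ isClosed_eq (hC g).continuous continuous_id
  have huniv := IsClopen.eq_univ ⟨hclosed, hopen⟩ hp
  exact (huniv ▸ Set.mem_univ x : x ∈ fixedPoints Γ ℝ) g

end ThurstonStability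

/-! ### Commuting groups of lifts -/

/-- Lifts to `ℝ` of orientation preserving homeomorphisms of the circle, as the invertible elements
of the monoid of monotone degree one maps. -/
abbrev CircleLift : Type := CircleDeg1Liftˣ

namespace CircleLift

open CircleDeg1Lift

/-- The translation number of an invertible lift. -/
def transNum (F : CircleLift) : ℝ := translationNumber (F : CircleDeg1Lift)

/-- The unit translation, which generates the deck group of `ℝ → 𝕊`. -/
def shift : CircleLift := translate (Multiplicative.ofAdd 1)

lemma mul_apply (F G : CircleLift) (x : ℝ) : (F * G : CircleLift) x = F (G x) := rfl

lemma strictMono (F : CircleLift) : StrictMono F := (toOrderIso F).strictMono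

lemma continuous (F : CircleLift) : Continuous F := (toOrderIso F).continuous

lemma ext {F G : CircleLift} (h : ∀ x, F x = G x) : F = G := Units.ext (CircleDeg1Lift.ext h)

lemma shift_zpow_apply (k : ℤ) (x : ℝ) : (shift ^ k : CircleLift) x = x + k := by
  rw [shift, translate_zpow, translate_apply, mul_one, add_comm]

lemma commute_shift (F : CircleLift) : Commute shift F :=
  ext fun x ↦ by
    rw [mul_apply, mul_apply, ← zpow_one shift, shift_zpow_apply, shift_zpow_apply, map_add_int]

lemma transNum_mul_of_commute {F G : CircleLift} (h : Commute F G) :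
    transNum (F * G) = transNum F + transNum G :=
  translationNumber_mul_of_commute (Units.ext_iff.1 h)

lemma transNum_conj (F G : CircleLift) : transNum (F * G * F⁻¹) = transNum G :=
  translationNumber_conj_eq F G

lemma transNum_mul_comm (F G : CircleLift) : transNum (F * G) = transNum (G * F) := by
  rw [← transNum_conj F (G * F), ← mul_assoc, mul_inv_cancel_right]

lemma transNum_pow (F : CircleLift) (n : ℕ) : transNum (F ^ n) = n * transNum F := by
  rw [transNum, Units.val_pow_eq_pow_val, translationNumber_pow, transNum]

lemma transNum_inv (F : CircleLift) : transNum F⁻¹ = -transNum F := translationNumber_units_inv F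

lemma transNum_eq_of_apply_eq_add {F : CircleLift} {x : ℝ} {k : ℤ} (h : F x = x + k) :
    transNum F = k := translationNumber_of_eq_add_int _ h

lemma transNum_eq_zero_of_apply_eq {F : CircleLift} {x : ℝ} (h : F x = x) : transNum F = 0 := by
  simpa using transNum_eq_of_apply_eq_add (k := 0) (by simpa using h)

lemma transNum_shift_zpow (k : ℤ) : transNum (shift ^ k) = k :=
  transNum_eq_of_apply_eq_add (shift_zpow_apply k 0)

lemma transNum_shift_zpow_mul (k : ℤ) (F : CircleLift) :
    transNum (shift ^ k * F) = k + transNum F := by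
  rw [transNum_mul_of_commute ((commute_shift F).zpow_left k), transNum_shift_zpow]

lemma exists_apply_eq_of_transNum_eq_zero {F : CircleLift} (h : transNum F = 0) : ∃ x, F x = x := by
  simpa using (translationNumber_eq_int_iff (F : CircleDeg1Lift) F.continuous (m := 0)).1
    (h.trans Int.cast_zero.symm)

lemma abs_displacement_sub_transNum_le (F : CircleLift) (x : ℝ) : |F x - x - transNum F| ≤ 1 := by
  have hupper := map_lt_add_translationNumber_add_one (F : CircleDeg1Lift) x
  have hlower := map_lt_add_translationNumber_add_one ((F⁻¹ : CircleLift) : CircleDeg1Lift) (F x)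
  rw [translationNumber_units_inv, units_inv_apply_apply] at hlower
  rw [transNum, abs_le]
  constructor <;> linarith

lemma forall_lt_or_forall_gt_of_forall_ne {F : CircleLift} (h : ∀ x, F x ≠ x) :
    (∀ x, x < F x) ∨ ∀ x, F x < x := by
  by_contra! hc
  obtain ⟨⟨x, hx⟩, ⟨y, hy⟩⟩ := hc
  obtain ⟨z, hz⟩ := intermediate_value_univ₂ F.continuous continuous_id hx hy
  exact h z hz

lemma eq_zero_of_forall_abs_natCast_mul_le {x C : ℝ} (h : ∀ k : ℕ, |k * x| ≤ C) : x = 0 := by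
  by_contra hx
  obtain ⟨k, hk⟩ := exists_nat_gt (C / |x|)
  rw [div_lt_iff₀ (abs_pos.2 hx)] at hk
  exact (hk.trans_eq (by rw [abs_mul, Nat.abs_cast])).not_ge (h k)

section PowerInequalities

variable {X : Set ℝ} {a b : CircleLift}

lemma mapsTo_pow (ha : Set.MapsTo a X X) (n : ℕ) : Set.MapsTo (a ^ n : CircleLift) X X := by
  rw [Units.val_pow_eq_pow_val, coe_pow]
  exact ha.iterate n

lemma apply_pow_le_pow_apply (hb : Set.MapsTo b X X) (hab : ∀ x ∈ X, a (b x) ≤ b (a x)) (n : ℕ) :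
    ∀ x ∈ X, a ((b ^ n : CircleLift) x) ≤ (b ^ n : CircleLift) (a x) := by
  induction n with
  | zero => exact fun x _ ↦ le_rfl
  | succ n ih =>
    intro x hx
    simp only [pow_succ, mul_apply]
    exact (ih _ (hb hx)).trans ((b ^ n).strictMono.monotone (hab x hx))

lemma pow_mul_pow_apply_le (ha : Set.MapsTo a X X) (hb : Set.MapsTo b X X)
    (hab : ∀ x ∈ X, a (b x) ≤ b (a x)) (n : ℕ) :
    ∀ x ∈ X, (a ^ n * b ^ n : CircleLift) x ≤ ((a * b) ^ n : CircleLift) x := by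
  induction n with
  | zero => simp
  | succ n ih =>
    intro x hx
    calc (a ^ (n + 1) * b ^ (n + 1) : CircleLift) x
        = (a ^ n : CircleLift) (a ((b ^ n : CircleLift) (b x))) := by
          simp only [pow_succ, mul_apply]
      _ ≤ (a ^ n : CircleLift) ((b ^ n : CircleLift) (a (b x))) :=
          (a ^ n).strictMono.monotone (apply_pow_le_pow_apply hb hab n _ (hb hx))
      _ ≤ ((a * b) ^ n : CircleLift) (a (b x)) := ih _ (ha (hb hx))
      _ = ((a * b) ^ (n + 1) : CircleLift) x := by rw [pow_succ, mul_apply, mul_apply]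

lemma mul_pow_apply_le (ha : Set.MapsTo a X X) (hb : Set.MapsTo b X X)
    (hab : ∀ x ∈ X, a (b x) ≤ b (a x)) (n : ℕ) :
    ∀ x ∈ X, ((a * b) ^ n : CircleLift) x ≤ (b ^ n * a ^ n : CircleLift) x := by
  induction n with
  | zero => simp
  | succ n ih =>
    intro x hx
    calc ((a * b) ^ (n + 1) : CircleLift) x
        = a (b (((a * b) ^ n : CircleLift) x)) := by rw [pow_succ', mul_apply, mul_apply]
      _ ≤ a (b ((b ^ n : CircleLift) ((a ^ n : CircleLift) x))) :=
          a.strictMono.monotone (b.strictMono.monotone (ih x hx))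
      _ = a ((b ^ (n + 1) : CircleLift) ((a ^ n : CircleLift) x)) := by rw [pow_succ' b, mul_apply]
      _ ≤ (b ^ (n + 1) : CircleLift) (a ((a ^ n : CircleLift) x)) :=
          apply_pow_le_pow_apply hb hab _ _ (mapsTo_pow ha n hx)
      _ = (b ^ (n + 1) * a ^ (n + 1) : CircleLift) x := by rw [pow_succ' a, mul_apply, mul_apply]

lemma transNum_mul_of_apply_le (hX : X.Nonempty) (ha : Set.MapsTo a X X) (hb : Set.MapsTo b X X)
    (hab : ∀ x ∈ X, a (b x) ≤ b (a x)) : transNum (a * b) = transNum a + transNum b := by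
  obtain ⟨x, hx⟩ := hX
  have hbound (n : ℕ) : |n * (transNum (a * b) - (transNum a + transNum b))| ≤ 3 := by
    have hle := pow_mul_pow_apply_le ha hb hab n x hx
    have hge := mul_pow_apply_le ha hb hab n x hx
    have hab' := abs_le.1 (abs_displacement_sub_transNum_le ((a * b) ^ n) x)
    have ha₁ := abs_le.1 (abs_displacement_sub_transNum_le (a ^ n) x)
    have hb₁ := abs_le.1 (abs_displacement_sub_transNum_le (b ^ n) x)
    have ha₂ := abs_le.1 (abs_displacement_sub_transNum_le (a ^ n) ((b ^ n : CircleLift) x))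
    have hb₂ := abs_le.1 (abs_displacement_sub_transNum_le (b ^ n) ((a ^ n : CircleLift) x))
    rw [transNum_pow] at hab' ha₁ hb₁ ha₂ hb₂
    rw [mul_apply] at hle hge
    rw [abs_le]
    constructor <;> linarith
  exact sub_eq_zero.1 (eq_zero_of_forall_abs_natCast_mul_le hbound)

end PowerInequalities

/-- `A` preserves the nonempty set `X`, and acts freely on it modulo the kernel of this action; even
a fixed point outside `X` forces an element of `A` to fix `X` pointwise. -/
structure ActsFreelyModKernel (A : Subgroup CircleLift) (X : Set ℝ) : Prop where
  nonempty : X.Nonempty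
  mapsTo : ∀ a ∈ A, Set.MapsTo a X X
  apply_eq : ∀ a ∈ A, (∃ y, a y = y) → ∀ x ∈ X, a x = x

/- By Hölder's argument: comparing `a * b` with `b * a` at one point of `X` compares them at all
points. -/
lemma ActsFreelyModKernel.transNum_mul {A : Subgroup CircleLift} {X : Set ℝ}
    (hX : ActsFreelyModKernel A X) {a b : CircleLift} (ha : a ∈ A) (hb : b ∈ A) :
    transNum (a * b) = transNum a + transNum b := by
  let c := (b * a)⁻¹ * (a * b)
  have hc (x : ℝ) : a (b x) = b (a (c x)) := by
    rw [← mul_apply a, ← mul_apply b a, ← mul_apply, mul_inv_cancel_left]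
  have hcA : c ∈ A := mul_mem (inv_mem (mul_mem hb ha)) (mul_mem ha hb)
  have hmono : Monotone (b * a : CircleLift) := (b * a).strictMono.monotone
  have hle : (∀ x ∈ X, a (b x) ≤ b (a x)) ∨ ∀ x ∈ X, b (a x) ≤ a (b x) := by
    by_cases hfix : ∃ y, c y = y
    · exact Or.inl fun x hx ↦ by rw [hc, hX.apply_eq c hcA hfix x hx]
    · rcases forall_lt_or_forall_gt_of_forall_ne (not_exists.1 hfix) with h | h
      · exact Or.inr fun x _ ↦ by rw [hc]; exact hmono (h x).le
      · exact Or.inl fun x _ ↦ by rw [hc]; exact hmono (h x).le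
  rcases hle with h | h
  · exact transNum_mul_of_apply_le hX.nonempty (hX.mapsTo a ha) (hX.mapsTo b hb) h
  · rw [transNum_mul_comm, add_comm]
    exact transNum_mul_of_apply_le hX.nonempty (hX.mapsTo b hb) (hX.mapsTo a ha) h

section Dichotomy

/-- A nonempty closed set preserved by all elements of `B`. -/
structure IsClosedInvariant (B : Subgroup CircleLift) (C : Set ℝ) : Prop where
  nonempty : C.Nonempty
  isClosed : IsClosed C
  mapsTo : ∀ b ∈ B, Set.MapsTo b C C

variable {A B : Subgroup CircleLift} {C D : Set ℝ}

lemma IsClosedInvariant.add_intCast_mem (hC : IsClosedInvariant B C) (hB : shift ∈ B) {x : ℝ}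
    (hx : x ∈ C) (k : ℤ) : x + k ∈ C := by
  rw [← shift_zpow_apply]
  exact hC.mapsTo _ (zpow_mem hB k) hx

/- The orbits of `d` and `c` interlace, hence converge to the same point. -/
lemma inter_nonempty_of_interlacing_orbits {f : ℝ → ℝ} (hf : Monotone f) (hC : IsClosed C)
    (hD : IsClosed D) (hfC : Set.MapsTo f C C) (hfD : Set.MapsTo f D D) {c d y : ℝ} (hc : c ∈ C)
    (hd : d ∈ D) (hdc : d ≤ c) (hcd : c ≤ f d) (hcy : c ≤ y) (hy : f y = y) :
    (C ∩ D).Nonempty := by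
  have hmono : Monotone fun n ↦ f^[n] c := hf.monotone_iterate_of_le_map (hcd.trans (hf hdc))
  have hbdd : BddAbove (Set.range fun n ↦ f^[n] c) := by
    refine ⟨y, ?_⟩
    rintro _ ⟨n, rfl⟩
    exact (hf.iterate n hcy).trans_eq (Function.iterate_fixed hy n)
  have hlimC := tendsto_atTop_ciSup hmono hbdd
  have hlimD : Tendsto (fun n ↦ f^[n + 1] d) atTop (𝓝 (⨆ n, f^[n] c)) :=
    tendsto_of_tendsto_of_tendsto_of_le_of_le hlimC (hlimC.comp (tendsto_add_atTop_nat 1))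
      (fun n ↦ hf.iterate n hcd) fun n ↦ hf.iterate (n + 1) hdc
  exact ⟨_, hC.mem_of_tendsto hlimC (.of_forall fun n ↦ hfC.iterate n hc),
    hD.mem_of_tendsto hlimD (.of_forall fun n ↦ hfD.iterate (n + 1) hd)⟩

lemma apply_le_of_disjoint (hC : IsClosedInvariant B C) (hD : IsClosedInvariant B D)
    (hdis : Disjoint C D) {c d : ℝ} (hc : c ∈ C) (hd : d ∈ D) (hdc : d ≤ c)
    (hgap : ∀ x ∈ C, x < c → x ≤ d) {F : CircleLift} (hF : F ∈ B) (hfix : ∃ y, F y = y) :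
    F c ≤ c := by
  by_contra! hlt
  obtain ⟨y, hy⟩ := hfix
  obtain ⟨k, hk⟩ := exists_int_gt (c - y)
  have hinv : (F⁻¹ : CircleLift) c < c := by
    simpa only [units_inv_apply_apply] using (F⁻¹).strictMono hlt
  have hcd : c ≤ F d := by
    simpa only [units_apply_inv_apply] using
      F.strictMono.monotone (hgap _ (hC.mapsTo _ (inv_mem hF) hc) hinv)
  exact Set.not_disjoint_iff_nonempty_inter.2 (inter_nonempty_of_interlacing_orbits
    F.strictMono.monotone hC.isClosed hD.isClosed (hC.mapsTo F hF) (hD.mapsTo F hF) hc hd hdc hcd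
    (y := y + k) (by linarith) (by rw [map_add_int, hy])) hdis

lemma exists_isLeast_ge_of_closedInvariant (hC : IsClosedInvariant B C) (hB : shift ∈ B) (d : ℝ) :
    ∃ c, IsLeast (C ∩ Set.Ici d) c := by
  obtain ⟨c₀, hc₀⟩ := hC.nonempty
  obtain ⟨k, hk⟩ := exists_int_gt (d - c₀)
  exact ⟨_, (hC.isClosed.inter isClosed_Ici).isLeast_csInf
    ⟨c₀ + k, hC.add_intCast_mem hB hc₀ k, by rw [Set.mem_Ici]; linarith⟩ ⟨d, fun x hx ↦ hx.2⟩⟩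

lemma exists_actsFreelyModKernel_of_disjoint (hB : shift ∈ B) (hC : IsClosedInvariant B C)
    (hD : IsClosedInvariant B D) (hdis : Disjoint C D) : ∃ X, ActsFreelyModKernel B X := by
  obtain ⟨d, hd⟩ := hD.nonempty
  obtain ⟨c, ⟨hc, hdc⟩, hleast⟩ := exists_isLeast_ge_of_closedInvariant hC hB d
  have hgap (x : ℝ) (hx : x ∈ C) (hxc : x < c) : x ≤ d := by
    by_contra! h
    exact (hleast ⟨hx, h.le⟩).not_gt hxc
  have hfix (F : CircleLift) (hF : F ∈ B) (hy : ∃ y, F y = y) : F c = c := by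
    refine (apply_le_of_disjoint hC hD hdis hc hd hdc hgap hF hy).antisymm ?_
    have hinv : (F⁻¹ : CircleLift) c ≤ c := by
      refine apply_le_of_disjoint hC hD hdis hc hd hdc hgap (inv_mem hF) (hy.imp fun y hy ↦ ?_)
      exact (congrArg (F⁻¹ : CircleLift) hy).symm.trans (units_inv_apply_apply F y)
    simpa only [units_apply_inv_apply] using F.strictMono.monotone hinv
  refine ⟨{x | ∃ b ∈ B, b c = x}, ⟨c, 1, one_mem B, rfl⟩, ?_, ?_⟩
  · rintro a ha _ ⟨b, hb, rfl⟩
    exact ⟨a * b, mul_mem ha hb, rfl⟩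
  · rintro a ha ⟨y, hy⟩ _ ⟨b, hb, rfl⟩
    have hconj := hfix (b⁻¹ * a * b) (mul_mem (mul_mem (inv_mem hb) ha) hb)
      ⟨(b⁻¹ : CircleLift) y, by rw [mul_apply, mul_apply, units_apply_inv_apply, hy]⟩
    simpa only [mul_apply, units_apply_inv_apply] using congrArg b hconj

lemma IsClosedInvariant.inter (hC : IsClosedInvariant B C) (hD : IsClosedInvariant B D)
    (h : (C ∩ D).Nonempty) : IsClosedInvariant B (C ∩ D) where
  nonempty := h
  isClosed := hC.isClosed.inter hD.isClosed
  mapsTo b hb := (hC.mapsTo b hb).inter_inter (hD.mapsTo b hb)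

lemma sInter_isClosedInvariant_nonempty (hB : shift ∈ B)
    (hmeet : ∀ C D, IsClosedInvariant B C → IsClosedInvariant B D → (C ∩ D).Nonempty) :
    (⋂ C : {C // IsClosedInvariant B C}, C.1).Nonempty := by
  have : Nonempty {C // IsClosedInvariant B C} :=
    ⟨⟨Set.univ, Set.univ_nonempty, isClosed_univ, fun _ _ ↦ Set.mapsTo_univ _ _⟩⟩
  have hpt (C : {C // IsClosedInvariant B C}) : (C.1 ∩ Set.Icc 0 1).Nonempty := by
    obtain ⟨x, hx⟩ := C.2.nonempty
    have hmem := C.2.add_intCast_mem hB hx (-⌊x⌋)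
    rw [Int.cast_neg, ← sub_eq_add_neg, Int.self_sub_floor] at hmem
    exact ⟨Int.fract x, hmem, Int.fract_nonneg x, (Int.fract_lt_one x).le⟩
  obtain ⟨x, hx⟩ : (⋂ C : {C // IsClosedInvariant B C}, C.1 ∩ Set.Icc 0 1).Nonempty := by
    refine IsCompact.nonempty_iInter_of_directed_nonempty_isCompact_isClosed _ (fun C D ↦ ?_) hpt
      (fun C ↦ isCompact_Icc.inter_left C.2.isClosed) fun C ↦ C.2.isClosed.inter isClosed_Icc
    exact ⟨⟨C.1 ∩ D.1, C.2.inter D.2 (hmeet _ _ C.2 D.2)⟩,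
      Set.inter_subset_inter_left _ Set.inter_subset_left,
      Set.inter_subset_inter_left _ Set.inter_subset_right⟩
  exact ⟨x, Set.iInter_mono (fun C ↦ Set.inter_subset_left) hx⟩

/- The fixed point set of `a` and the preimages of closed invariant sets under `a` are closed and
invariant under the centralizer of `a`. -/
lemma exists_actsFreelyModKernel_of_inter_nonempty (hB : shift ∈ B)
    (hcomm : ∀ a ∈ A, ∀ b ∈ B, Commute a b)
    (hmeet : ∀ C D, IsClosedInvariant B C → IsClosedInvariant B D → (C ∩ D).Nonempty) :
    ∃ X, ActsFreelyModKernel A X := by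
  have hab {a b : CircleLift} (ha : a ∈ A) (hb : b ∈ B) (x : ℝ) : a (b x) = b (a x) := by
    rw [← mul_apply, (hcomm a ha b hb).eq, mul_apply]
  refine ⟨_, sInter_isClosedInvariant_nonempty hB hmeet, fun a ha x hx ↦ ?_,
    fun a ha hfix x hx ↦ ?_⟩
  · rw [Set.mem_iInter] at hx ⊢
    intro C
    obtain ⟨z, hz⟩ := C.2.nonempty
    refine hx ⟨a ⁻¹' C.1, ⟨(a⁻¹ : CircleLift) z, ?_⟩, C.2.isClosed.preimage a.continuous, ?_⟩
    · rwa [Set.mem_preimage, units_apply_inv_apply]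
    · intro b hb y hy
      rw [Set.mem_preimage, hab ha hb]
      exact C.2.mapsTo b hb hy
  · refine Set.mem_iInter.1 hx ⟨{y | a y = y}, hfix, isClosed_eq a.continuous continuous_id, ?_⟩
    intro b hb y hy
    exact (hab ha hb y).trans (congrArg b hy)

theorem exists_actsFreelyModKernel_or (hcomm : ∀ a ∈ A, ∀ b ∈ B, Commute a b) (hB : shift ∈ B) :
    (∃ X, ActsFreelyModKernel A X) ∨ ∃ X, ActsFreelyModKernel B X := by
  by_cases hmeet : ∀ C D, IsClosedInvariant B C → IsClosedInvariant B D → (C ∩ D).Nonempty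
  · exact Or.inl (exists_actsFreelyModKernel_of_inter_nonempty hB hcomm hmeet)
  · push Not at hmeet
    obtain ⟨C, D, hC, hD, hCD⟩ := hmeet
    exact Or.inr
      (exists_actsFreelyModKernel_of_disjoint hB hC hD (Set.disjoint_iff_inter_eq_empty.2 hCD))

end Dichotomy

/-! ### Rotation numbers on the circle -/

/-- `F` is a lift of the circle bijection `σ`. -/
def IsLift (σ : Equiv.Perm 𝕊) (F : CircleLift) : Prop := ∀ x : ℝ, σ (x : 𝕊) = (F x : 𝕊)

lemma coe_eq_coe_iff {x y : ℝ} : (x : 𝕊) = (y : 𝕊) ↔ ∃ k : ℤ, x = y + k := by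
  simp only [QuotientAddGroup.eq_iff_sub_mem, AddSubgroup.mem_zmultiples_iff, zsmul_one,
    sub_eq_iff_eq_add', eq_comm]

namespace IsLift

variable {σ τ : Equiv.Perm 𝕊} {F G : CircleLift}

lemma one : IsLift 1 1 := fun _ ↦ rfl

lemma mul (hF : IsLift σ F) (hG : IsLift τ G) : IsLift (σ * τ) (F * G) := fun x ↦ by
  rw [Equiv.Perm.mul_apply, hG x, hF, mul_apply]

lemma inv (hF : IsLift σ F) : IsLift σ⁻¹ F⁻¹ := fun x ↦ by
  rw [Equiv.Perm.inv_eq_iff_eq, hF, CircleDeg1Lift.units_apply_inv_apply]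

lemma pow (hF : IsLift σ F) (n : ℕ) : IsLift (σ ^ n) (F ^ n) := by
  induction n with
  | zero => simpa only [pow_zero] using one
  | succ n ih => simpa only [pow_succ] using ih.mul hF

lemma shift_zpow (k : ℤ) : IsLift 1 (shift ^ k) := fun x ↦
  coe_eq_coe_iff.2 ⟨-k, by rw [shift_zpow_apply, Int.cast_neg, add_neg_cancel_right]⟩

lemma exists_eq_shift_zpow (hF : IsLift 1 F) : ∃ k : ℤ, F = shift ^ k := by
  choose k hk using fun x ↦ coe_eq_coe_iff.1 (hF x).symm
  have hconst (x : ℝ) : k x = k 0 := Int.cast_injective (α := ℝ)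
    ((transNum_eq_of_apply_eq_add (hk x)).symm.trans (transNum_eq_of_apply_eq_add (hk 0)))
  exact ⟨k 0, ext fun x ↦ by rw [hk, hconst, shift_zpow_apply]⟩

lemma exists_eq_shift_zpow_mul (hF : IsLift σ F) (hG : IsLift σ G) :
    ∃ k : ℤ, F = shift ^ k * G := by
  obtain ⟨k, hk⟩ := exists_eq_shift_zpow (mul_inv_cancel σ ▸ hF.mul hG.inv)
  exact ⟨k, mul_inv_eq_iff_eq_mul.1 hk⟩

lemma eq_of_transNum_eq (hF : IsLift σ F) (hG : IsLift σ G) (h : transNum F = transNum G) :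
    F = G := by
  obtain ⟨k, rfl⟩ := hF.exists_eq_shift_zpow_mul hG
  rw [transNum_shift_zpow_mul, add_eq_right, Int.cast_eq_zero] at h
  rw [h, zpow_zero, one_mul]

lemma commute (hF : IsLift σ F) (hG : IsLift τ G) (h : Commute σ τ) : Commute F G := by
  have hconj : IsLift τ (F * G * F⁻¹) := by
    simpa only [h.eq, mul_inv_cancel_right] using (hF.mul hG).mul hF.inv
  exact mul_inv_eq_iff_eq_mul.1 (hconj.eq_of_transNum_eq hG (transNum_conj F G))

lemma exists_apply_eq (hF : IsLift σ F) {x : ℝ} (hx : σ (x : 𝕊) = x) :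
    ∃ G, IsLift σ G ∧ G x = x := by
  obtain ⟨k, hk⟩ := coe_eq_coe_iff.1 ((hF x).symm.trans hx)
  refine ⟨shift ^ (-k) * F, by simpa only [one_mul] using (shift_zpow (-k)).mul hF, ?_⟩
  rw [mul_apply, shift_zpow_apply, hk, Int.cast_neg, add_neg_cancel_right]

end IsLift

end CircleLift

open CircleLift

lemma IsOPLift.exists_isLift {σ : Equiv.Perm 𝕊} {f : ℝ → ℝ} (h : IsOPLift σ f) :
    ∃ F : CircleLift, IsLift σ F ∧ ⇑F = f := by
  obtain ⟨hcont, hmono, hadd, hσ⟩ := h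
  let f' : CircleDeg1Lift := ⟨⟨f, hmono.monotone⟩, hadd⟩
  obtain ⟨F, hF⟩ : IsUnit f' := CircleDeg1Lift.isUnit_iff_bijective.2
    ⟨hmono.injective, Continuous.surjective hcont f'.tendsto_atTop f'.tendsto_atBot⟩
  have hFf : ⇑F = f := by rw [hF]; rfl
  exact ⟨F, fun x ↦ by rw [hFf, hσ], hFf⟩

lemma IsOPHomeo.exists_isLift {σ : Equiv.Perm 𝕊} (h : IsOPHomeo σ) :
    ∃ F : CircleLift, IsLift σ F := by
  obtain ⟨f, hf⟩ := h
  exact hf.exists_isLift.imp fun F hF ↦ hF.1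

lemma IsC1Diffeo.isOPHomeo {σ : Equiv.Perm 𝕊} (h : IsC1Diffeo σ) : IsOPHomeo σ :=
  h.imp fun _ hf ↦ hf.1

lemma IsC1Diffeo.contDiff {σ : Equiv.Perm 𝕊} (h : IsC1Diffeo σ) {F : CircleLift}
    (hF : IsLift σ F) : ContDiff ℝ 1 F := by
  obtain ⟨f, hf, hC, -⟩ := h
  obtain ⟨G, hG, rfl⟩ := hf.exists_isLift
  obtain ⟨k, rfl⟩ := hF.exists_eq_shift_zpow_mul hG
  have happly : ⇑(shift ^ k * G : CircleLift) = fun x ↦ G x + k :=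
    funext fun x ↦ by rw [mul_apply, shift_zpow_apply]
  exact happly ▸ hC.add contDiff_const

section FixedPoint

variable {Γ : Type*} [Group Γ] {ρ : Γ →* Equiv.Perm 𝕊} {x : ℝ}

lemma exists_monoidHom_isLift (hρ : ∀ g, IsOPHomeo (ρ g)) (hx : ∀ g, ρ g (x : 𝕊) = x) :
    ∃ φ : Γ →* CircleLift, ∀ g, IsLift (ρ g) (φ g) ∧ φ g x = x := by
  choose φ hφ hφx using fun g ↦ (hρ g).exists_isLift.choose_spec.exists_apply_eq (hx g)
  refine ⟨MonoidHom.mk' φ fun g h ↦ ?_, fun g ↦ ⟨hφ g, hφx g⟩⟩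
  refine (hφ (g * h)).eq_of_transNum_eq (map_mul ρ g h ▸ (hφ g).mul (hφ h)) ?_
  rw [transNum_eq_zero_of_apply_eq (hφx _), transNum_eq_zero_of_apply_eq (x := x)]
  rw [mul_apply, hφx, hφx]

theorem eq_one_of_isC1Diffeo_of_fixed [Group.FG Γ] [Subsingleton (Γ →* Multiplicative ℝ)]
    (hρ : ∀ g, IsC1Diffeo (ρ g)) (hx : ∀ g, ρ g (x : 𝕊) = x) : ρ = 1 := by
  obtain ⟨φ, hφ⟩ := exists_monoidHom_isLift (fun g ↦ (hρ g).isOPHomeo) hx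
  let : MulAction Γ ℝ :=
    { smul := fun g y ↦ φ g y
      one_smul := fun y ↦ congrArg (fun F : CircleLift ↦ F y) (map_one φ)
      mul_smul := fun g h y ↦ congrArg (fun F : CircleLift ↦ F y) (map_mul φ g h) }
  have hfix (g : Γ) (y : ℝ) : φ g y = y :=
    ThurstonStability.smul_eq_self (fun g ↦ (hρ g).contDiff (hφ g).1)
      (fun g ↦ (φ g).strictMono.monotone) ⟨x, fun g ↦ (hφ g).2⟩ g y
  ext g p
  obtain ⟨y, rfl⟩ := QuotientAddGroup.mk_surjective p
  exact ((hφ g).1 y).trans (congrArg _ (hfix g y))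

end FixedPoint

/-- `e` times the rotation number of the circle homeomorphism `σ` vanishes in `ℝ / ℤ`. -/
def HasTorsionRotationNumber (e : ℕ) (σ : Equiv.Perm 𝕊) : Prop :=
  ∃ F, IsLift σ F ∧ ∃ k : ℤ, e * transNum F = k

lemma HasTorsionRotationNumber.exists_eq_intCast {e : ℕ} {σ : Equiv.Perm 𝕊}
    (h : HasTorsionRotationNumber e σ) {F : CircleLift} (hF : IsLift σ F) :
    ∃ k : ℤ, e * transNum F = k := by
  obtain ⟨G, hG, k, hk⟩ := h
  obtain ⟨j, rfl⟩ := hF.exists_eq_shift_zpow_mul hG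
  exact ⟨e * j + k, by push_cast; rw [transNum_shift_zpow_mul, mul_add, hk]⟩

lemma HasTorsionRotationNumber.mul_left {e : ℕ} {σ : Equiv.Perm 𝕊}
    (h : HasTorsionRotationNumber e σ) (d : ℕ) : HasTorsionRotationNumber (d * e) σ := by
  obtain ⟨F, hF, k, hk⟩ := h
  exact ⟨F, hF, d * k, by push_cast; rw [mul_assoc, hk]⟩

section RotationCharacter

variable {S : Type*} [Group S]

/-- The group of all lifts of the circle bijections `ρ s`. -/
def liftSubgroup (ρ : S →* Equiv.Perm 𝕊) : Subgroup CircleLift where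
  carrier := {F | ∃ s, IsLift (ρ s) F}
  one_mem' := ⟨1, (map_one ρ).symm ▸ .one⟩
  mul_mem' := by
    rintro F G ⟨s, hs⟩ ⟨t, ht⟩
    exact ⟨s * t, (map_mul ρ s t).symm ▸ hs.mul ht⟩
  inv_mem' := by
    rintro F ⟨s, hs⟩
    exact ⟨s⁻¹, (map_inv ρ s).symm ▸ hs.inv⟩

lemma shift_zpow_mem_liftSubgroup (ρ : S →* Equiv.Perm 𝕊) (k : ℤ) :
    shift ^ k ∈ liftSubgroup ρ := ⟨1, (map_one ρ).symm ▸ .shift_zpow k⟩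

variable {ρ : S →* Equiv.Perm 𝕊} {gens : Set S} {e : ℕ} {X : Set ℝ}

lemma CircleLift.ActsFreelyModKernel.exists_transNum_mul
    (hX : ActsFreelyModKernel (liftSubgroup ρ) X) {s t : S} {F G H : CircleLift}
    (hF : IsLift (ρ s) F) (hG : IsLift (ρ t) G) (hH : IsLift (ρ (s * t)) H) :
    ∃ k : ℤ, transNum H = k + (transNum F + transNum G) := by
  obtain ⟨k, rfl⟩ := hH.exists_eq_shift_zpow_mul (map_mul ρ s t ▸ hF.mul hG)
  exact ⟨k, by rw [transNum_shift_zpow_mul, hX.transNum_mul ⟨s, hF⟩ ⟨t, hG⟩]⟩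

lemma CircleLift.ActsFreelyModKernel.hasTorsionRotationNumber
    (hX : ActsFreelyModKernel (liftSubgroup ρ) X)
    (hgens : Subgroup.closure gens = ⊤) (htor : ∀ s ∈ gens, HasTorsionRotationNumber e (ρ s))
    (s : S) : HasTorsionRotationNumber e (ρ s) := by
  have hs : s ∈ Subgroup.closure gens := hgens ▸ Subgroup.mem_top s
  induction hs using Subgroup.closure_induction with
  | mem s hs => exact htor s hs
  | one => exact ⟨shift ^ (0 : ℤ), (map_one ρ).symm ▸ .shift_zpow 0, 0, by
      rw [transNum_shift_zpow, Int.cast_zero, mul_zero]⟩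
  | mul s t _ _ hs ht =>
    obtain ⟨F, hF, i, hi⟩ := hs
    obtain ⟨G, hG, j, hj⟩ := ht
    refine ⟨F * G, (map_mul ρ s t).symm ▸ hF.mul hG, i + j, ?_⟩
    rw [hX.transNum_mul ⟨s, hF⟩ ⟨t, hG⟩, mul_add, hi, hj, Int.cast_add]
  | inv s _ hs =>
    obtain ⟨F, hF, i, hi⟩ := hs
    exact ⟨F⁻¹, (map_inv ρ s).symm ▸ hF.inv, -i, by
      rw [transNum_inv, mul_neg, hi, Int.cast_neg]⟩

/- The character is the rotation number. -/
lemma CircleLift.ActsFreelyModKernel.exists_character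
    (hX : ActsFreelyModKernel (liftSubgroup ρ) X) (hρ : ∀ s, IsOPHomeo (ρ s)) (he : 0 < e)
    (htor : ∀ s, HasTorsionRotationNumber e (ρ s)) :
    ∃ (χ : S →* Multiplicative (ZMod e)) (x : ℝ), ∀ s, χ s = 1 → ρ s (x : 𝕊) = x := by
  choose f hf using fun s ↦ (hρ s).exists_isLift
  choose P hP using fun s ↦ (htor s).exists_eq_intCast (hf s)
  have he' : (e : ℝ) ≠ 0 := Nat.cast_ne_zero.2 he.ne'
  have hadd (s t : S) : (P (s * t) : ZMod e) = P s + P t := by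
    obtain ⟨k, hk⟩ := hX.exists_transNum_mul (hf s) (hf t) (hf (s * t))
    have hPst : P (s * t) = e * k + (P s + P t) := by
      apply Int.cast_injective (α := ℝ)
      push_cast
      rw [← hP, ← hP, ← hP, hk, mul_add, mul_add]
    simp [hPst]
  obtain ⟨x, hx⟩ := hX.nonempty
  refine ⟨MonoidHom.mk' (fun s ↦ Multiplicative.ofAdd (P s : ZMod e))
    fun s t ↦ congrArg Multiplicative.ofAdd (hadd s t), x, fun s hs ↦ ?_⟩
  obtain ⟨k, hk⟩ := (ZMod.intCast_zmod_eq_zero_iff_dvd (P s) e).1 hs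
  have htrans : transNum (f s) = k :=
    mul_left_cancel₀ he' (by rw [hP, hk, Int.cast_mul, Int.cast_natCast])
  have hfix := hX.apply_eq (shift ^ (-k) * f s)
    (mul_mem (shift_zpow_mem_liftSubgroup ρ _) ⟨s, hf s⟩) (exists_apply_eq_of_transNum_eq_zero (by
      rw [transNum_shift_zpow_mul, htrans, Int.cast_neg, neg_add_cancel])) x hx
  exact (hf s x).trans
    (coe_eq_coe_iff.2 ⟨k, by rwa [mul_apply, shift_zpow_apply, Int.cast_neg,
      ← sub_eq_add_neg, sub_eq_iff_eq_add] at hfix⟩)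

theorem exists_character_of_commuting_actions {ρ₁ ρ₂ : S →* Equiv.Perm 𝕊}
    (hρ₁ : ∀ s, IsOPHomeo (ρ₁ s)) (hρ₂ : ∀ s, IsOPHomeo (ρ₂ s))
    (hcomm : ∀ s t, Commute (ρ₁ s) (ρ₂ t)) (hgens : Subgroup.closure gens = ⊤) (he : 0 < e)
    (htor₁ : ∀ s ∈ gens, HasTorsionRotationNumber e (ρ₁ s))
    (htor₂ : ∀ s ∈ gens, HasTorsionRotationNumber e (ρ₂ s)) :
    ∃ (χ : S →* Multiplicative (ZMod e)) (x : ℝ),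
      (∀ s, χ s = 1 → ρ₁ s (x : 𝕊) = x) ∨ ∀ s, χ s = 1 → ρ₂ s (x : 𝕊) = x := by
  have hlift : ∀ F ∈ liftSubgroup ρ₁, ∀ G ∈ liftSubgroup ρ₂, Commute F G := by
    rintro F ⟨s, hF⟩ G ⟨t, hG⟩
    exact hF.commute hG (hcomm s t)
  have hshift : shift ∈ liftSubgroup ρ₂ := zpow_one shift ▸ shift_zpow_mem_liftSubgroup ρ₂ 1
  rcases exists_actsFreelyModKernel_or hlift hshift with ⟨X, hX⟩ | ⟨X, hX⟩
  · obtain ⟨χ, x, h⟩ := hX.exists_character hρ₁ he (hX.hasTorsionRotationNumber hgens htor₁)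
    exact ⟨χ, x, Or.inl h⟩
  · obtain ⟨χ, x, h⟩ := hX.exists_character hρ₂ he (hX.hasTorsionRotationNumber hgens htor₂)
    exact ⟨χ, x, Or.inr h⟩

end RotationCharacter

/-! ### Torsion rotation numbers -/

section ListProd

variable {G : Type*} [Group G]

lemma prod_map_pow_mul_conj_mul_pow (x u : G) (n : ℕ) :
    ((List.range n).map fun i ↦ x ^ (i + 1) * u * (x ^ (i + 1))⁻¹).prod * x ^ n = (x * u) ^ n := by
  induction n with
  | zero => simp
  | succ n ih =>
    rw [List.prod_range_succ, pow_succ (x * u), ← ih]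
    group

lemma prod_map_conj_pow_mul_prod (T : ℕ → G) (k n : ℕ) :
    ((List.range n).map fun i ↦
      ((List.range i).map T).prod * T i ^ k * (((List.range i).map T).prod)⁻¹).prod *
        ((List.range n).map T).prod = ((List.range n).map fun i ↦ T i ^ (k + 1)).prod := by
  induction n with
  | zero => simp
  | succ n ih =>
    simp only [List.prod_range_succ]
    rw [← ih, pow_succ']
    group

variable {T : ℕ → G} {a b z : G} {m : ℕ}

lemma conj_prod_map_pow
    (hb : ∀ i, b * T i * b⁻¹ = ((List.range i).map T).prod * T i * (((List.range i).map T).prod)⁻¹)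
    (k n : ℕ) : b * ((List.range n).map fun i ↦ T i ^ k).prod * b⁻¹ * ((List.range n).map T).prod =
      ((List.range n).map fun i ↦ T i ^ (k + 1)).prod := by
  rw [← prod_map_conj_pow_mul_prod, ← MulAut.conj_apply, map_list_prod, List.map_map]
  congr 3
  ext i
  rw [Function.comp_apply, map_pow, MulAut.conj_apply, hb, conj_pow]

lemma pow_conj_eq_zpow_mul_prod_mul (hz : ∀ g, Commute z g)
    (hb : ∀ i, b * T i * b⁻¹ = ((List.range i).map T).prod * T i * (((List.range i).map T).prod)⁻¹)
    (ha : b * a * b⁻¹ = z * (((List.range m).map T).prod * a)) (k : ℕ) :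
    b ^ k * a * (b ^ k)⁻¹ = z ^ k * (((List.range m).map fun i ↦ T i ^ k).prod * a) := by
  induction k with
  | zero => simp
  | succ k ih =>
    calc b ^ (k + 1) * a * (b ^ (k + 1))⁻¹
        = b * (b ^ k * a * (b ^ k)⁻¹) * b⁻¹ := by rw [pow_succ']; group
      _ = (b * z ^ k * b⁻¹) * (b * ((List.range m).map fun i ↦ T i ^ k).prod * b⁻¹) *
            (b * a * b⁻¹) := by rw [ih]; group
      _ = z ^ k * ((b * ((List.range m).map fun i ↦ T i ^ k).prod * b⁻¹) * z) *
            (((List.range m).map T).prod * a) := by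
          rw [← ((hz b).pow_left k).eq, mul_inv_cancel_right, ha]
          group
      _ = z ^ k * z * (((b * ((List.range m).map fun i ↦ T i ^ k).prod * b⁻¹) *
            ((List.range m).map T).prod) * a) := by
          rw [← (hz _).eq]
          group
      _ = z ^ (k + 1) * (((List.range m).map fun i ↦ T i ^ (k + 1)).prod * a) := by
          rw [conj_prod_map_pow hb, pow_succ z]

end ListProd

namespace CircleLift

lemma IsLift.list_prod_map {ι : Type*} {σ : ι → Equiv.Perm 𝕊} {F : ι → CircleLift}
    (h : ∀ i, IsLift (σ i) (F i)) (l : List ι) : IsLift (l.map σ).prod (l.map F).prod := by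
  induction l with
  | nil => exact .one
  | cons i l ih => simpa only [List.map_cons, List.prod_cons] using (h i).mul ih

lemma abs_displacement_list_prod_sub_le {ι : Type*} {F : ι → CircleLift} {t : ℝ}
    (h : ∀ i, transNum (F i) = t) (l : List ι) (x : ℝ) :
    |((l.map F).prod : CircleLift) x - x - l.length * t| ≤ l.length := by
  induction l with
  | nil => simp
  | cons i l ih =>
    have htail := abs_le.1 ih
    have hhead := abs_displacement_sub_transNum_le (F i) (((l.map F).prod : CircleLift) x)
    rw [h, abs_le] at hhead
    rw [List.map_cons, List.prod_cons, mul_apply, List.length_cons, abs_le]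
    push_cast
    constructor <;> linarith

lemma natCast_mul_transNum_eq_of_relations {T : ℕ → CircleLift} {a b : CircleLift} {t : ℝ} {m : ℕ}
    {k : ℤ} (hT : ∀ i, transNum (T i) = t)
    (hb : ∀ i, b * T i * b⁻¹ = ((List.range i).map T).prod * T i * (((List.range i).map T).prod)⁻¹)
    (ha : b * a * b⁻¹ = shift ^ k * (((List.range m).map T).prod * a)) : m * t = -k := by
  rw [← add_eq_zero_iff_eq_neg]
  refine eq_zero_of_forall_abs_natCast_mul_le (C := m + 2 + 2 * |transNum a|) fun j ↦ ?_
  have hconj := abs_displacement_sub_transNum_le (b ^ j * a * (b ^ j)⁻¹) 0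
  rw [transNum_conj, pow_conj_eq_zpow_mul_prod_mul (fun F ↦ (commute_shift F).zpow_left k) hb ha,
    mul_apply, ← zpow_natCast (shift ^ k), ← zpow_mul, shift_zpow_apply, mul_apply] at hconj
  have hprod := abs_displacement_list_prod_sub_le (F := fun i ↦ T i ^ j) (t := j * t)
    (fun i ↦ by rw [transNum_pow, hT]) (List.range m) (a 0)
  rw [List.length_range] at hprod
  push_cast at hconj
  have ha₀ := abs_le.1 (abs_displacement_sub_transNum_le a 0)
  have hconj' := abs_le.1 hconj
  have hprod' := abs_le.1 hprod
  have habs := abs_le.1 (le_refl |transNum a|)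
  rw [show (j : ℝ) * (m * t + k) = m * (j * t) + k * j by ring, abs_le]
  constructor <;> linarith

end CircleLift

section TorsionRotationNumber

variable {G : Type*} [Group G] {ρ : G →* Equiv.Perm 𝕊}

/- Translation numbers are conjugation invariant, so the first relation holds exactly for lifts and
the second up to a translation by some integer `k`. Iterating, the `j`-th power of `b` conjugates
the lift of `a` to its product with `j k` shifts and `m` maps of translation number `j` times that
of `t`, but leaves the translation number unchanged. -/
theorem hasTorsionRotationNumber_of_relations (hρ : ∀ g, IsOPHomeo (ρ g)) {T : ℕ → G} {t a b : G}
    {m : ℕ} (hT : ∀ i, IsConj t (T i))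
    (hb : ∀ i, b * T i * b⁻¹ = ((List.range i).map T).prod * T i * (((List.range i).map T).prod)⁻¹)
    (ha : b * a * b⁻¹ = ((List.range m).map T).prod * a) : HasTorsionRotationNumber m (ρ t) := by
  choose f hf using fun g ↦ (hρ g).exists_isLift
  choose c hc using fun i ↦ isConj_iff.1 (hT i)
  let U (i : ℕ) : CircleLift := f (c i) * f t * (f (c i))⁻¹
  have hU (i : ℕ) : IsLift (ρ (T i)) (U i) := by
    rw [← hc i, map_mul, map_mul, map_inv]
    exact ((hf _).mul (hf _)).mul (hf _).inv
  have hprod (i : ℕ) : IsLift (ρ ((List.range i).map T).prod) ((List.range i).map U).prod := by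
    rw [map_list_prod, List.map_map]
    exact .list_prod_map hU _
  have hbU (i : ℕ) : f b * U i * (f b)⁻¹ =
      ((List.range i).map U).prod * U i * (((List.range i).map U).prod)⁻¹ := by
    refine IsLift.eq_of_transNum_eq (((hf b).mul (hU i)).mul (hf b).inv) ?_
      ((transNum_conj _ _).trans (transNum_conj _ _).symm)
    rw [← map_inv, ← map_mul, ← map_mul, hb, map_mul, map_mul, map_inv]
    exact ((hprod i).mul (hU i)).mul (hprod i).inv
  obtain ⟨k, hk⟩ : ∃ k : ℤ, f b * f a * (f b)⁻¹ = shift ^ k * (((List.range m).map U).prod * f a) :=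
    IsLift.exists_eq_shift_zpow_mul (((hf b).mul (hf a)).mul (hf b).inv) (by
      rw [← map_inv, ← map_mul, ← map_mul, ha, map_mul]
      exact (hprod m).mul (hf a))
  refine ⟨f t, hf t, -k, ?_⟩
  rw [Int.cast_neg]
  exact natCast_mul_transNum_eq_of_relations (fun i ↦ transNum_conj _ _) hbU hk

theorem hasTorsionRotationNumber_of_pow_eq_mul (hρ : ∀ g, IsOPHomeo (ρ g)) {g r l : G} {d e : ℕ}
    (hrl : Commute r l) (hg : g ^ d = r * l) (hr : HasTorsionRotationNumber e (ρ r))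
    (hl : HasTorsionRotationNumber e (ρ l)) : HasTorsionRotationNumber (e * d) (ρ g) := by
  obtain ⟨K, hK⟩ := (hρ g).exists_isLift
  obtain ⟨R, hR, i, hi⟩ := hr
  obtain ⟨L, hL, j, hj⟩ := hl
  have hpow : IsLift (ρ r * ρ l) (K ^ d) := by
    rw [← map_mul, ← hg, map_pow]
    exact hK.pow d
  obtain ⟨k, hk⟩ := hpow.exists_eq_shift_zpow_mul (hR.mul hL)
  refine ⟨K, hK, e * k + (i + j), ?_⟩
  push_cast
  rw [mul_assoc, ← transNum_pow, hk, transNum_shift_zpow_mul,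
    transNum_mul_of_commute (hR.commute hL (hrl.map ρ)), mul_add, mul_add, hi, hj]

end TorsionRotationNumber

/-! ### Transvections of free groups -/

section Transvections

open FreeGroup (of lift)
open scoped commutatorElement

variable {ι : Type*}

theorem mulAut_freeGroup_ext {f g : MulAut (FreeGroup ι)} (h : ∀ i, f (of i) = g (of i)) :
    f = g :=
  MulEquiv.toMonoidHom_injective (FreeGroup.ext_hom _ _ h)

variable [DecidableEq ι]

/-- The endomorphism of the free group that deletes the letter `z`. An element avoids the
letter `z` exactly when it is fixed by `killLetter z`. -/
def killLetter (z : ι) : FreeGroup ι →* FreeGroup ι := lift (Function.update of z 1)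

@[simp]
theorem killLetter_of_self (z : ι) : killLetter z (of z) = 1 := by simp [killLetter]

theorem killLetter_of_ne {z i : ι} (h : i ≠ z) : killLetter z (of i) = of i := by
  simp [killLetter, h]

theorem killLetter_of_pow {z i : ι} (h : i ≠ z) (n : ℕ) :
    killLetter z (of i ^ n) = of i ^ n := by
  rw [map_pow, killLetter_of_ne h]

theorem killLetter_commutator {z i j : ι} (hi : i ≠ z) (hj : j ≠ z) :
    killLetter z ⁅of i, of j⁆ = ⁅of i, of j⁆ := by
  rw [map_commutatorElement, killLetter_of_ne hi, killLetter_of_ne hj]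

theorem killLetter_comm (z j : ι) (w : FreeGroup ι) :
    killLetter z (killLetter j w) = killLetter j (killLetter z w) := by
  suffices (killLetter z).comp (killLetter j) = (killLetter j).comp (killLetter z) from
    DFunLike.congr_fun this w
  refine FreeGroup.ext_hom _ _ fun i ↦ ?_
  by_cases hz : i = z
  · by_cases hj : i = j <;> simp_all [killLetter_of_ne]
  · by_cases hj : i = j <;> simp_all [killLetter_of_ne]

@[simp]
theorem killLetter_killLetter (z : ι) (w : FreeGroup ι) :
    killLetter z (killLetter z w) = killLetter z w := by
  suffices (killLetter z).comp (killLetter z) = killLetter z from DFunLike.congr_fun this w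
  refine FreeGroup.ext_hom _ _ fun i ↦ ?_
  by_cases h : i = z
  · simp [h]
  · simp [killLetter_of_ne h]

/-- The endomorphism underlying `transvection`. -/
def transvectionHom (z : ι) (p : FreeGroup ι × FreeGroup ι) : FreeGroup ι →* FreeGroup ι :=
  lift (Function.update of z ((killLetter z p.1)⁻¹ * of z * killLetter z p.2))

theorem transvectionHom_of_self (z : ι) (p : FreeGroup ι × FreeGroup ι) :
    transvectionHom z p (of z) = (killLetter z p.1)⁻¹ * of z * killLetter z p.2 := by
  simp [transvectionHom]

theorem transvectionHom_of_ne {z i : ι} (h : i ≠ z) (p : FreeGroup ι × FreeGroup ι) :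
    transvectionHom z p (of i) = of i := by
  simp [transvectionHom, h]

theorem transvectionHom_killLetter (z : ι) (p : FreeGroup ι × FreeGroup ι) (v : FreeGroup ι) :
    transvectionHom z p (killLetter z v) = killLetter z v := by
  suffices (transvectionHom z p).comp (killLetter z) = killLetter z from DFunLike.congr_fun this v
  refine FreeGroup.ext_hom _ _ fun i ↦ ?_
  by_cases h : i = z
  · simp [h]
  · simp [killLetter_of_ne h, transvectionHom_of_ne h]

theorem transvectionHom_one (z : ι) :
    transvectionHom z (1 : FreeGroup ι × FreeGroup ι) = MonoidHom.id _ :=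
  FreeGroup.ext_hom _ _ fun i ↦ by simp [transvectionHom]

theorem transvectionHom_mul (z : ι) (p q : FreeGroup ι × FreeGroup ι) :
    transvectionHom z (p * q) = (transvectionHom z p).comp (transvectionHom z q) := by
  refine FreeGroup.ext_hom _ _ fun i ↦ ?_
  by_cases h : i = z
  · subst h
    simp only [MonoidHom.comp_apply, transvectionHom_of_self, map_mul, map_inv,
      transvectionHom_killLetter, Prod.fst_mul, Prod.snd_mul]
    group
  · simp only [MonoidHom.comp_apply, transvectionHom_of_ne h]

/-- The automorphism `x_z ↦ u⁻¹ x_z w` fixing the other letters, where the letter `z` is first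
deleted from the pair `(u, w)`; this deletion makes it a homomorphism in `(u, w)`. -/
def transvection (z : ι) : FreeGroup ι × FreeGroup ι →* MulAut (FreeGroup ι) where
  toFun p := (transvectionHom z p).toMulEquiv (transvectionHom z p⁻¹)
    (by rw [← transvectionHom_mul, inv_mul_cancel, transvectionHom_one])
    (by rw [← transvectionHom_mul, mul_inv_cancel, transvectionHom_one])
  map_one' := MulEquiv.toMonoidHom_injective (transvectionHom_one z)
  map_mul' p q := MulEquiv.toMonoidHom_injective (transvectionHom_mul z p q)

/-- The automorphism `x_z ↦ x_z w`. -/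
abbrev rightTransvection (z : ι) : FreeGroup ι →* MulAut (FreeGroup ι) :=
  (transvection z).comp (MonoidHom.inr _ _)

/-- The automorphism `x_z ↦ w⁻¹ x_z`. -/
abbrev leftTransvection (z : ι) : FreeGroup ι →* MulAut (FreeGroup ι) :=
  (transvection z).comp (MonoidHom.inl _ _)

/-- The automorphism `x_z ↦ w⁻¹ x_z w`. -/
abbrev partialConj (z : ι) : FreeGroup ι →* MulAut (FreeGroup ι) :=
  (transvection z).comp ((MonoidHom.id _).prod (MonoidHom.id _))

theorem transvection_of_self (z : ι) (p : FreeGroup ι × FreeGroup ι) :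
    transvection z p (of z) = (killLetter z p.1)⁻¹ * of z * killLetter z p.2 :=
  transvectionHom_of_self z p

theorem transvection_of_ne {z i : ι} (h : i ≠ z) (p : FreeGroup ι × FreeGroup ι) :
    transvection z p (of i) = of i :=
  transvectionHom_of_ne h p

theorem transvection_killLetter (z : ι) (p : FreeGroup ι × FreeGroup ι) (v : FreeGroup ι) :
    transvection z p (killLetter z v) = killLetter z v :=
  transvectionHom_killLetter z p v

theorem transvection_apply_of_killLetter_eq {z : ι} {v : FreeGroup ι} (h : killLetter z v = v)
    (p : FreeGroup ι × FreeGroup ι) : transvection z p v = v := by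
  rw [← h, transvection_killLetter]

theorem transvection_congr {z : ι} {p q : FreeGroup ι × FreeGroup ι}
    (h₁ : killLetter z p.1 = killLetter z q.1) (h₂ : killLetter z p.2 = killLetter z q.2) :
    transvection z p = transvection z q := by
  refine mulAut_freeGroup_ext fun i ↦ ?_
  by_cases h : i = z
  · subst h
    rw [transvection_of_self, transvection_of_self, h₁, h₂]
  · rw [transvection_of_ne h, transvection_of_ne h]

theorem killLetter_transvection {z j : ι} (h : z ≠ j) {p : FreeGroup ι × FreeGroup ι}
    (h₁ : killLetter z p.1 = p.1) (h₂ : killLetter z p.2 = p.2) (w : FreeGroup ι) :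
    killLetter z (transvection j p w) = transvection j p (killLetter z w) := by
  suffices (killLetter z).comp (transvection j p).toMonoidHom =
      (transvection j p).toMonoidHom.comp (killLetter z) from DFunLike.congr_fun this w
  refine FreeGroup.ext_hom _ _ fun i ↦ ?_
  by_cases hz : i = z
  · subst hz
    simp [transvection_of_ne h]
  · by_cases hj : i = j
    · subst hj
      simp [transvection_of_self, killLetter_of_ne hz, killLetter_comm z, h₁, h₂]
    · simp [transvection_of_ne hj, killLetter_of_ne hz]

theorem mul_transvection_mul_inv {θ : MulAut (FreeGroup ι)} {z z' : ι} (hz : θ (of z) = of z')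
    (hθ : ∀ w, killLetter z' (θ w) = θ (killLetter z w)) (p : FreeGroup ι × FreeGroup ι) :
    θ * transvection z p * θ⁻¹ = transvection z' (θ p.1, θ p.2) := by
  rw [mul_inv_eq_iff_eq_mul]
  refine mulAut_freeGroup_ext fun i ↦ ?_
  rw [MulAut.mul_apply, MulAut.mul_apply]
  by_cases h : i = z
  · subst h
    rw [transvection_of_self, map_mul, map_mul, map_inv, hz, transvection_of_self, hθ, hθ]
  · rw [transvection_of_ne h, transvection_apply_of_killLetter_eq]
    rw [hθ, killLetter_of_ne h]

theorem transvection_mul_transvection_mul_inv {z j : ι} (h : z ≠ j) {p : FreeGroup ι × FreeGroup ι}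
    (h₁ : killLetter z p.1 = p.1) (h₂ : killLetter z p.2 = p.2) (q : FreeGroup ι × FreeGroup ι) :
    transvection j p * transvection z q * (transvection j p)⁻¹ =
      transvection z (transvection j p q.1, transvection j p q.2) :=
  mul_transvection_mul_inv (transvection_of_ne h p) (killLetter_transvection h h₁ h₂) q

theorem rightTransvection_of_self (z : ι) (w : FreeGroup ι) :
    rightTransvection z w (of z) = of z * killLetter z w := by
  simp [transvection_of_self]

theorem rightTransvection_eq_one {z : ι} {w : FreeGroup ι} (h : killLetter z w = 1) :
    rightTransvection z w = 1 := by
  rw [← map_one (rightTransvection z)]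
  exact transvection_congr rfl (h.trans (map_one _).symm)

theorem rightTransvection_mul_rightTransvection_mul_inv {z j : ι} (h : z ≠ j) {u : FreeGroup ι}
    (hu : killLetter z u = u) (w : FreeGroup ι) :
    rightTransvection j u * rightTransvection z w * (rightTransvection j u)⁻¹ =
      rightTransvection z (rightTransvection j u w) := by
  have hconj := transvection_mul_transvection_mul_inv h (p := (1, u)) (map_one _) hu (1, w)
  rwa [map_one] at hconj

theorem commute_transvection {z j : ι} (h : z ≠ j) {p q : FreeGroup ι × FreeGroup ι}
    (hp₁ : killLetter z p.1 = p.1) (hp₂ : killLetter z p.2 = p.2)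
    (hq₁ : killLetter j q.1 = q.1) (hq₂ : killLetter j q.2 = q.2) :
    Commute (transvection j p) (transvection z q) := by
  have hconj := transvection_mul_transvection_mul_inv h hp₁ hp₂ q
  rw [transvection_apply_of_killLetter_eq hq₁, transvection_apply_of_killLetter_eq hq₂] at hconj
  exact mul_inv_eq_iff_eq_mul.1 hconj

theorem commute_left_right (z : ι) (u w : FreeGroup ι) :
    Commute (leftTransvection z u) (rightTransvection z w) :=
  (MonoidHom.commute_inl_inr u w).map (transvection z)

theorem right_mul_left_eq_partialConj (z : ι) (w : FreeGroup ι) :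
    rightTransvection z w * leftTransvection z w = partialConj z w := by
  simp [← map_mul]

theorem mul_rightTransvection_mul_inv_of_perm (π : Equiv.Perm ι) (z : ι) (w : FreeGroup ι) :
    (FreeGroup.freeGroupCongr π : MulAut (FreeGroup ι)) * rightTransvection z w *
        (FreeGroup.freeGroupCongr π : MulAut (FreeGroup ι))⁻¹ =
      rightTransvection (π z) (FreeGroup.map π w) := by
  have hkill (v) : killLetter (π z) (FreeGroup.map π v) = FreeGroup.map π (killLetter z v) := by
    suffices (killLetter (π z)).comp (FreeGroup.map π) = (FreeGroup.map π).comp (killLetter z) from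
      DFunLike.congr_fun this v
    refine FreeGroup.ext_hom _ _ fun i ↦ ?_
    by_cases h : i = z
    · simp [h]
    · simp [killLetter_of_ne h, killLetter_of_ne (π.injective.ne h)]
  exact (mul_transvection_mul_inv (by simp) hkill (1, w)).trans (by simp)

/-- The automorphism fixing `x_z` and conjugating the other letters by `g`, with the letter `z`
deleted from `g`. -/
def conjOthers (z : ι) : FreeGroup ι →* MulAut (FreeGroup ι) :=
  MonoidHom.mk' (fun g ↦ MulAut.conj (killLetter z g) * partialConj z g) fun g h ↦ by
    have hcomm : Commute (MulAut.conj (killLetter z h)) (partialConj z g) := by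
      ext x
      simp [transvection_killLetter]
    rw [map_mul, map_mul, map_mul, hcomm.mul_mul_mul_comm]

theorem conjOthers_of_self (z : ι) (g : FreeGroup ι) : conjOthers z g (of z) = of z := by
  simp [conjOthers, transvection_of_self, mul_assoc]

theorem conjOthers_killLetter (z : ι) (g v : FreeGroup ι) :
    conjOthers z g (killLetter z v) = killLetter z (g * v * g⁻¹) := by
  simp [conjOthers, transvection_killLetter]

theorem conjOthers_of_ne {z i : ι} (h : i ≠ z) (g : FreeGroup ι) :
    conjOthers z g (of i) = killLetter z g * of i * (killLetter z g)⁻¹ := by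
  simp [conjOthers, transvection_of_ne h]

theorem conjOthers_mul_transvection_mul_inv (z : ι) (g : FreeGroup ι)
    (p : FreeGroup ι × FreeGroup ι) :
    conjOthers z g * transvection z p * (conjOthers z g)⁻¹ =
      transvection z (g * p.1 * g⁻¹, g * p.2 * g⁻¹) := by
  have hkill (v) : killLetter z (conjOthers z g v) = conjOthers z g (killLetter z v) := by
    suffices (killLetter z).comp (conjOthers z g).toMonoidHom =
        (conjOthers z g).toMonoidHom.comp (killLetter z) from DFunLike.congr_fun this v
    refine FreeGroup.ext_hom _ _ fun i ↦ ?_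
    by_cases h : i = z
    · simp [h, conjOthers_of_self]
    · simp [conjOthers_of_ne h, killLetter_of_ne h]
  rw [mul_transvection_mul_inv (conjOthers_of_self z g) hkill]
  apply transvection_congr <;> rw [hkill, conjOthers_killLetter]

theorem conjOthers_mul_rightTransvection_mul_inv (z : ι) (g w : FreeGroup ι) :
    conjOthers z g * rightTransvection z w * (conjOthers z g)⁻¹ =
      rightTransvection z (g * w * g⁻¹) := by
  simpa using conjOthers_mul_transvection_mul_inv z g (1, w)

end Transvections

/-! ### Cyclic groups -/

section Cyclic

lemma exists_coprime_add_mul {i j n : ℕ} (hn : n ≠ 0)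
    (h : ∀ p, p.Prime → p ∣ n → p ∣ i → ¬ p ∣ j) : ∃ s, (i + s * j).Coprime n := by
  refine ⟨∏ p ∈ n.primeFactors with ¬ p ∣ i, p, Nat.coprime_of_dvd fun p hp hpij hpn ↦ ?_⟩
  by_cases hpi : p ∣ i
  · rcases hp.dvd_mul.1 ((Nat.dvd_add_right hpi).1 hpij) with hps | hpj
    · obtain ⟨q, hq, hpq⟩ := (hp.prime.dvd_finsetProd_iff _).1 hps
      rw [Finset.mem_filter, Nat.mem_primeFactors] at hq
      exact hq.2 ((Nat.prime_dvd_prime_iff_eq hp hq.1.1).1 hpq ▸ hpi)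
    · exact h p hp hpn hpi hpj
  · refine hpi ((Nat.dvd_add_left (Dvd.dvd.mul_right (Finset.dvd_prod_of_mem _ ?_) j)).1 hpij)
    exact Finset.mem_filter.2 ⟨Nat.mem_primeFactors.2 ⟨hp, hpn, hn⟩, hpi⟩

theorem mem_zpowers_of_forall_orderOf_mul_pow_le {C : Type*} [CommGroup C] [IsCyclic C] [Finite C]
    {a b : C} (h : ∀ s : ℕ, orderOf (a * b ^ s) ≤ orderOf a) : b ∈ Subgroup.zpowers a := by
  obtain ⟨c, hc⟩ := (Subgroup.isCyclic_iff_exists_zpowers_eq_top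
    (Subgroup.zpowers a ⊔ Subgroup.zpowers b)).1 inferInstance
  have ha : a ∈ Subgroup.zpowers c := hc ▸ Subgroup.mem_sup_left (Subgroup.mem_zpowers a)
  have hb : b ∈ Subgroup.zpowers c := hc ▸ Subgroup.mem_sup_right (Subgroup.mem_zpowers b)
  obtain ⟨i, hi : c ^ i = a⟩ := mem_powers_iff_mem_zpowers.2 ha
  obtain ⟨j, hj : c ^ j = b⟩ := mem_powers_iff_mem_zpowers.2 hb
  have hij (p : ℕ) (hp : p.Prime) (hpc : p ∣ orderOf c) (hpi : p ∣ i) : ¬ p ∣ j := by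
    intro hpj
    have hpow {k : ℕ} (hk : p ∣ k) : Subgroup.zpowers (c ^ k) ≤ Subgroup.zpowers (c ^ p) := by
      obtain ⟨l, rfl⟩ := hk
      rw [Subgroup.zpowers_le, pow_mul]
      exact Subgroup.npow_mem_zpowers _ _
    have hsup : Subgroup.zpowers a ⊔ Subgroup.zpowers b ≤ Subgroup.zpowers (c ^ p) :=
      sup_le (hi ▸ hpow hpi) (hj ▸ hpow hpj)
    have hcp : c ∈ Subgroup.zpowers (c ^ p) := hsup (hc ▸ Subgroup.mem_zpowers c)
    exact hp.ne_one ((Nat.gcd_eq_left hpc).symm.trans (mem_zpowers_pow_iff.1 hcp))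
  obtain ⟨s, hs⟩ := exists_coprime_add_mul (orderOf_pos c).ne' hij
  have habs : a * b ^ s = c ^ (i + s * j) := by
    rw [← hi, ← hj, pow_add, pow_mul', mul_comm]
  have hcard : orderOf c ≤ orderOf a := (Nat.Coprime.orderOf_pow hs.symm).symm.trans_le (habs ▸ h s)
  rw [← Nat.card_zpowers, ← Nat.card_zpowers] at hcard
  rwa [Subgroup.eq_of_le_of_card_ge (Subgroup.zpowers_le.2 ha) hcard]

end Cyclic

/-! ### Homomorphisms on a normal subgroup and their conjugation twists -/

section ConjTwist

variable {G A : Type*} [Group G] {N : Subgroup G} [N.Normal] [CommGroup A]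

/-- The twist `k ↦ f (g k g⁻¹)` of a homomorphism on a normal subgroup. -/
def conjTwist (g : G) (f : N →* A) : N →* A := f.comp (MulAut.conjNormal g).toMonoidHom

theorem conjTwist_apply (g : G) (f : N →* A) (k : N) :
    conjTwist g f k = f (MulAut.conjNormal g k) := rfl

@[simp]
theorem conjTwist_one (f : N →* A) : conjTwist 1 f = f := by
  ext k
  rw [conjTwist_apply, map_one, MulAut.one_apply]

theorem conjTwist_conjTwist (g h : G) (f : N →* A) :
    conjTwist g (conjTwist h f) = conjTwist (h * g) f := by
  ext k
  rw [conjTwist_apply, conjTwist_apply, conjTwist_apply, map_mul, MulAut.mul_apply]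

theorem conjTwist_div (g : G) (f f' : N →* A) :
    conjTwist g (f / f') = conjTwist g f / conjTwist g f' := rfl

theorem conjTwist_pow (g : G) (f : N →* A) (n : ℕ) :
    conjTwist g (f ^ n) = conjTwist g f ^ n := rfl

theorem conjTwist_mul (g : G) (f f' : N →* A) :
    conjTwist g (f * f') = conjTwist g f * conjTwist g f' := rfl

theorem conjTwist_of_mem {g : G} (hg : g ∈ N) (f : N →* A) : conjTwist g f = f := by
  ext k
  have hconj : MulAut.conjNormal g k = ⟨g, hg⟩ * k * ⟨g, hg⟩⁻¹ :=
    Subtype.ext (MulAut.conjNormal_apply g k)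
  rw [conjTwist_apply, hconj, map_mul, map_mul, map_inv, mul_inv_cancel_comm]

/- A homomorphism invariant under conjugation has transfer `k ↦ f k ^ [G : N]`. -/
theorem eq_one_of_forall_conjTwist_eq [N.FiniteIndex] [IsMulTorsionFree A] [Subsingleton (G →* A)]
    {f : N →* A} (h : ∀ g, conjTwist g f = f) : f = 1 := by
  ext k
  have htransfer : f.transfer (k : G) = f k ^ N.index := by
    let _ := N.fintypeQuotientOfFiniteIndex
    have T : N.LeftTransversal := default
    have hact (q : G ⧸ N) : (k : G)⁻¹ • q = q := by
      induction q using QuotientGroup.induction_on with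
      | H g =>
        rw [MulAction.Quotient.smul_coe, QuotientGroup.eq]
        simpa [mul_assoc] using ‹N.Normal›.conj_mem k k.2 g⁻¹
    rw [MonoidHom.transfer_def f T, Subgroup.leftTransversals.diff, Subgroup.index,
      Nat.card_eq_fintype_card, ← Finset.card_univ]
    refine Finset.prod_eq_pow_card fun q _ ↦ ?_
    let g : G := (T.2.leftQuotientEquiv q : G)
    refine .trans (congrArg f (Subtype.ext ?_)) (DFunLike.congr_fun (h g⁻¹) k)
    rw [Subgroup.coe_mk, MulEquiv.coe_toMonoidHom, MulAut.conjNormal_apply,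
      Subgroup.smul_apply_eq_smul_apply_inv_smul, hact, inv_inv, smul_eq_mul, mul_assoc]
  rw [Subsingleton.elim f.transfer 1, MonoidHom.one_apply] at htransfer
  exact (pow_eq_one_iff_left Subgroup.FiniteIndex.index_ne_zero).1 htransfer.symm

theorem exists_mul_pow_eq_and_apply_eq_pow {f : N →* A} {x : G} {u : N}
    (h : ∀ i : ℕ, f (MulAut.conjNormal (x ^ i) u) = f u) (n : ℕ) :
    ∃ p : N, p * x ^ n = (x * u) ^ n ∧ f p = f u ^ n := by
  refine ⟨((List.range n).map fun i ↦ MulAut.conjNormal (x ^ (i + 1)) u).prod, ?_, ?_⟩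
  · rw [← prod_map_pow_mul_conj_mul_pow, ← N.coe_subtype, map_list_prod, List.map_map]
    rfl
  · rw [map_list_prod, List.map_map]
    simp only [Function.comp_def, h, List.map_const', List.prod_replicate, List.length_range]

end ConjTwist

section KernelOfCharacter

open scoped commutatorElement

variable {H C A : Type*} [Group H] [CommGroup C] [CommGroup A] {X : H →* C}

theorem commutator_mem_ker (X : H →* C) (g h : H) : ⁅g, h⁆ ∈ X.ker := by
  rw [MonoidHom.mem_ker, map_commutatorElement, commutatorElement_eq_one_iff_mul_comm, mul_comm]

theorem conjTwist_congr {g h : H} (hgh : X g = X h) (φ : X.ker →* A) :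
    conjTwist g φ = conjTwist h φ := by
  have hmem : g * h⁻¹ ∈ X.ker := by rw [MonoidHom.mem_ker, map_mul, map_inv, hgh, mul_inv_cancel]
  rw [← inv_mul_cancel_right g h, ← conjTwist_conjTwist, conjTwist_of_mem hmem]

/-- The value `φ [t, h]` of a homomorphism `φ` on the kernel of a character. -/
def commPairing (φ : X.ker →* A) (t h : H) : A := φ ⟨⁅t, h⁆, commutator_mem_ker X t h⟩

theorem commPairing_div (φ ψ : X.ker →* A) (t h : H) :
    commPairing (φ / ψ) t h = commPairing φ t h / commPairing ψ t h := rfl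

theorem commPairing_mul_right (φ : X.ker →* A) (t g h : H) :
    commPairing φ t (g * h) = commPairing φ t g * commPairing (conjTwist g φ) t h := by
  rw [commPairing, commPairing, commPairing, conjTwist_apply, ← map_mul]
  congr 1
  ext
  rw [Subgroup.coe_mul, MulAut.conjNormal_apply]
  simp only [commutatorElement_def]
  group

theorem commPairing_of_commute (φ : X.ker →* A) {t h : H} (hth : Commute t h) :
    commPairing φ t h = 1 :=
  (congrArg φ (Subtype.ext (commutatorElement_eq_one_iff_commute.2 hth))).trans (map_one φ)

theorem commPairing_of_mem_ker (φ : X.ker →* A) (t : H) (k : X.ker) :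
    commPairing φ t k = (conjTwist t φ / φ) k := by
  rw [commPairing, MonoidHom.div_apply, conjTwist_apply, ← map_div]
  congr 1
  ext
  simp [commutatorElement_def, div_eq_mul_inv]

theorem commPairing_conjTwist_div_of_commute (φ : X.ker →* A) {t h z : H} (hz : Commute h z) :
    commPairing (conjTwist z φ / φ) t h =
      commPairing (conjTwist h φ) t z / commPairing φ t z := by
  rw [commPairing_div, div_eq_div_iff_mul_eq_mul, mul_comm, ← commPairing_mul_right, mul_comm,
    ← commPairing_mul_right, hz.eq]

/-- The difference operator `φ ↦ φ(y · y⁻¹) / φ`. -/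
def diffOp (y : H) (φ : X.ker →* A) : X.ker →* A := conjTwist y φ / φ

theorem conjTwist_diffOp (y h : H) (φ : X.ker →* A) :
    conjTwist h (diffOp y φ) = diffOp y (conjTwist h φ) := by
  have hcomm : X (y * h) = X (h * y) := by rw [map_mul, map_mul, mul_comm]
  rw [diffOp, diffOp, conjTwist_div, conjTwist_conjTwist, conjTwist_conjTwist,
    conjTwist_congr hcomm]

theorem conjTwist_iterate_diffOp (y h : H) (j : ℕ) (φ : X.ker →* A) :
    conjTwist h ((diffOp y)^[j] φ) = (diffOp y)^[j] (conjTwist h φ) :=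
  Function.Semiconj.iterate_right (conjTwist_diffOp y h) j φ

theorem diffOp_eq_one_of_diffOp_diffOp_eq_one [Finite C] [IsMulTorsionFree A] {y : H}
    {φ : X.ker →* A} (h : diffOp y (diffOp y φ) = 1) : diffOp y φ = 1 := by
  have hy : conjTwist y φ = φ * diffOp y φ := (mul_div_cancel φ _).symm
  have hpow (n : ℕ) : conjTwist (y ^ n) φ = φ * diffOp y φ ^ n := by
    induction n with
    | zero => rw [pow_zero, pow_zero, conjTwist_one, mul_one]
    | succ n ih =>
      rw [pow_succ, ← conjTwist_conjTwist, ih, conjTwist_mul, conjTwist_pow, div_eq_one.1 h, hy,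
        mul_assoc, pow_succ']
  have hmem : y ^ orderOf (X y) ∈ X.ker := by rw [MonoidHom.mem_ker, map_pow, pow_orderOf_eq_one]
  have hroot : diffOp y φ ^ orderOf (X y) = 1 := by
    rw [← mul_eq_left, ← hpow, conjTwist_of_mem hmem]
  ext k
  exact (pow_eq_one_iff_left (orderOf_pos (X y)).ne').1 (DFunLike.congr_fun hroot k)

variable (A X) in
/-- The elements `h` with `(D^j φ) [t, h] = 1` for all `φ : ker X →* A`, where `D = diffOp y`. -/
def vanishingSubgroup (y t : H) (j : ℕ) : Subgroup H where
  carrier := {h | ∀ φ : X.ker →* A, commPairing ((diffOp y)^[j] φ) t h = 1}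
  one_mem' _ := commPairing_of_commute _ (Commute.one_right t)
  mul_mem' {g h} hg hh φ := by
    rw [commPairing_mul_right, hg, conjTwist_iterate_diffOp, hh, mul_one]
  inv_mem' {h} hh φ := by
    have hinv := commPairing_mul_right ((diffOp y)^[j] φ) t h⁻¹ h
    rwa [inv_mul_cancel, commPairing_of_commute _ (Commute.one_right t), conjTwist_iterate_diffOp,
      hh, mul_one, eq_comm] at hinv

variable {y t : H} {j : ℕ}

theorem mem_vanishingSubgroup_zero_of_commute {h : H} (hth : Commute t h) :
    h ∈ vanishingSubgroup A X y t 0 :=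
  fun φ ↦ commPairing_of_commute φ hth

theorem vanishingSubgroup_le_succ :
    vanishingSubgroup A X y t j ≤ vanishingSubgroup A X y t (j + 1) :=
  fun _ hh φ ↦ hh (diffOp y φ)

/- If `h` commutes with `z`, expanding `[t, h z] = [t, z h]` trades a twist by `z` for one by
`h`. -/
theorem mem_vanishingSubgroup_succ_of_commute {h z : H} (hz : z ∈ vanishingSubgroup A X y t j)
    (hX : X z = X y ∨ X z = (X y)⁻¹) (hhz : Commute h z) :
    h ∈ vanishingSubgroup A X y t (j + 1) := by
  have key (φ : X.ker →* A) : commPairing (conjTwist z ((diffOp y)^[j] φ) / (diffOp y)^[j] φ) t h =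
      1 := by
    rw [commPairing_conjTwist_div_of_commute _ hhz, conjTwist_iterate_diffOp, hz, hz, div_one]
  intro φ
  rw [Function.iterate_succ_apply']
  rcases hX with hX | hX
  · rw [diffOp, ← conjTwist_congr hX, key]
  · have hzy : X (y * z) = X 1 := by rw [map_mul, hX, mul_inv_cancel, map_one]
    have hinv := key (conjTwist y φ)
    rw [← conjTwist_iterate_diffOp, conjTwist_conjTwist, conjTwist_congr hzy, conjTwist_one,
      commPairing_div, div_eq_one] at hinv
    rw [diffOp, commPairing_div, hinv, div_self']

/- On the kernel, `h ↦ φ [t, h]` is `φ` twisted by `t` divided by `φ`, so the hypothesis makes every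
`D² φ` invariant under `t`, hence under `y`. As `D` is a unipotent operator of finite order,
already `φ` is invariant under `y`, hence under all of `H`. -/
theorem subsingleton_ker_hom [Finite C] [IsMulTorsionFree A] [Subsingleton (H →* A)]
    (hX : ∀ h, X h ∈ Subgroup.zpowers (X y)) (hty : X t = (X y)⁻¹)
    (hV : vanishingSubgroup A X y t 2 = ⊤) : Subsingleton (X.ker →* A) := by
  refine subsingleton_of_forall_eq 1 fun φ ↦ ?_
  have ht : conjTwist t (diffOp y (diffOp y φ)) = diffOp y (diffOp y φ) := by
    rw [← div_eq_one]
    ext k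
    rw [← commPairing_of_mem_ker]
    exact (hV ▸ Subgroup.mem_top (k : H) : (k : H) ∈ vanishingSubgroup A X y t 2) φ
  have hyt : X (t * y) = X 1 := by rw [map_mul, hty, inv_mul_cancel, map_one]
  have hD₃ : diffOp y (diffOp y (diffOp y φ)) = 1 := by
    rw [diffOp, div_eq_one, ← ht, conjTwist_conjTwist, conjTwist_congr hyt, conjTwist_one, ht]
  have hD : diffOp y φ = 1 := diffOp_eq_one_of_diffOp_diffOp_eq_one
    (diffOp_eq_one_of_diffOp_diffOp_eq_one hD₃)
  have hpow (n : ℕ) : conjTwist (y ^ n) φ = φ := by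
    induction n with
    | zero => rw [pow_zero, conjTwist_one]
    | succ n ih => rw [pow_succ, ← conjTwist_conjTwist, ih, div_eq_one.1 hD]
  refine eq_one_of_forall_conjTwist_eq fun h ↦ ?_
  obtain ⟨n, hn : X y ^ n = X h⟩ := mem_powers_iff_mem_zpowers.2 (hX h)
  rw [← conjTwist_congr ((map_pow X y n).trans hn), hpow]

end KernelOfCharacter

/-! ### The kernel of `F → (ℤ/N)^ι` and its transvections -/

section ModKernel

open FreeGroup (of)
open scoped commutatorElement

variable {ι : Type*}

variable (ι) in
/-- The kernel of the reduction `F → (ℤ/N)^ι` of the free group on `ι`, presented by normal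
generators. -/
def modKernel (N : ℕ) : Subgroup (FreeGroup ι) :=
  Subgroup.normalClosure (Set.range (fun i ↦ of i ^ N) ∪ Set.range fun p : ι × ι ↦ ⁅of p.1, of p.2⁆)

instance (N : ℕ) : (modKernel ι N).Normal := Subgroup.normalClosure_normal

variable {N : ℕ}

theorem of_pow_mem_modKernel (i : ι) : of i ^ N ∈ modKernel ι N :=
  Subgroup.subset_normalClosure (.inl ⟨i, rfl⟩)

theorem modKernel_le {K : Subgroup (FreeGroup ι)} [K.Normal] (hpow : ∀ i, of i ^ N ∈ K)
    (hcomm : ∀ i j : ι, ⁅of i, of j⁆ ∈ K) : modKernel ι N ≤ K := by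
  refine Subgroup.normalClosure_le_normal (Set.union_subset ?_ ?_)
  · exact Set.range_subset_iff.2 hpow
  · exact Set.range_subset_iff.2 fun p ↦ hcomm p.1 p.2

theorem commute_mk_modKernel (u v : FreeGroup ι) :
    Commute (u : FreeGroup ι ⧸ modKernel ι N) (v : FreeGroup ι ⧸ modKernel ι N) := by
  have hcomm {x : FreeGroup ι ⧸ modKernel ι N} (hx : ∀ i, Commute x (of i : FreeGroup ι))
      (v : FreeGroup ι) : Commute x (v : FreeGroup ι ⧸ modKernel ι N) := by
    induction v using FreeGroup.induction_on with
    | C1 => exact .one_right x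
    | of i => exact hx i
    | inv_of i h => exact h.inv_right
    | mul u v hu hv => exact hu.mul_right hv
  refine hcomm (fun i ↦ (hcomm (fun j ↦ ?_) u).symm) v
  rw [← commutatorElement_eq_one_iff_commute]
  exact (QuotientGroup.eq_one_iff ⁅of i, of j⁆).2
    (Subgroup.subset_normalClosure (.inr ⟨(i, j), rfl⟩))

theorem commutator_mem_modKernel (u v : FreeGroup ι) : ⁅u, v⁆ ∈ modKernel ι N := by
  rw [← QuotientGroup.eq_one_iff]
  exact commutatorElement_eq_one_iff_commute.2 (commute_mk_modKernel u v)

theorem pow_mem_modKernel (v : FreeGroup ι) : v ^ N ∈ modKernel ι N := by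
  rw [← QuotientGroup.eq_one_iff, QuotientGroup.mk_pow]
  induction v using FreeGroup.induction_on with
  | C1 => exact one_pow N
  | of i => exact (QuotientGroup.eq_one_iff _).2 (of_pow_mem_modKernel i)
  | inv_of i h => rw [QuotientGroup.mk_inv, inv_pow, h, inv_one]
  | mul u v hu hv => rw [QuotientGroup.mk_mul, (commute_mk_modKernel u v).mul_pow, hu, hv, mul_one]

theorem modKernel_mul_le (m e : ℕ) : modKernel ι (m * e) ≤ modKernel ι m :=
  modKernel_le (fun i ↦ pow_mul (of i) m e ▸ pow_mem (of_pow_mem_modKernel i) e)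
    fun _ _ ↦ commutator_mem_modKernel _ _

theorem map_mem_modKernel (θ : FreeGroup ι →* FreeGroup ι) {v : FreeGroup ι}
    (hv : v ∈ modKernel ι N) : θ v ∈ modKernel ι N := by
  refine modKernel_le (K := (modKernel ι N).comap θ) (fun i ↦ ?_) (fun i j ↦ ?_) hv
  · rw [Subgroup.mem_comap, map_pow]
    exact pow_mem_modKernel _
  · rw [Subgroup.mem_comap, map_commutatorElement]
    exact commutator_mem_modKernel _ _

theorem modKernel_finiteIndex [Finite ι] (hN : N ≠ 0) : (modKernel ι N).FiniteIndex := by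
  let _ : CommGroup (FreeGroup ι ⧸ modKernel ι N) :=
    { mul_comm := by
        rintro ⟨u⟩ ⟨v⟩
        exact commute_mk_modKernel u v }
  have hfg : Group.FG (FreeGroup ι ⧸ modKernel ι N) := QuotientGroup.fg _
  have htor : IsMulTorsion (FreeGroup ι ⧸ modKernel ι N) := by
    rintro ⟨v⟩
    exact isOfFinOrder_iff_pow_eq_one.2
      ⟨N, hN.pos, (QuotientGroup.eq_one_iff _).2 (pow_mem_modKernel v)⟩
  have := CommGroup.finite_of_fg_isMulTorsion (FreeGroup ι ⧸ modKernel ι N) htor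
  exact Subgroup.finiteIndex_of_finite_quotient

theorem modKernel_hom_eq_one {A : Type*} [CommGroup A] {f : modKernel ι N →* A}
    (hpow : ∀ g i, conjTwist g f ⟨of i ^ N, of_pow_mem_modKernel i⟩ = 1)
    (hcomm : ∀ g i j, conjTwist g f ⟨⁅of i, of j⁆, commutator_mem_modKernel _ _⟩ = 1) : f = 1 := by
  have hle : modKernel ι N ≤ f.ker.map (modKernel ι N).subtype := by
    refine (Subgroup.closure_le _).2 fun x hx ↦ ?_
    obtain ⟨y, hy, hyx⟩ := Group.mem_conjugatesOfSet_iff.1 hx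
    obtain ⟨g, rfl⟩ := isConj_iff.1 hyx
    rcases hy with ⟨i, rfl⟩ | ⟨p, rfl⟩
    · exact ⟨_, hpow g i, MulAut.conjNormal_apply _ _⟩
    · exact ⟨_, hcomm g p.1 p.2, MulAut.conjNormal_apply _ _⟩
  ext k
  obtain ⟨k', hk', hkk'⟩ := hle k.2
  rwa [← Subtype.ext hkk']

variable [DecidableEq ι]

theorem transvection_mul_inv_mem_modKernel {p : FreeGroup ι × FreeGroup ι}
    (hp : p ∈ (modKernel ι N).prod (modKernel ι N)) (j : ι) (v : FreeGroup ι) :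
    transvection j p v * v⁻¹ ∈ modKernel ι N := by
  let π := QuotientGroup.mk' (modKernel ι N)
  suffices h : π.comp (transvection j p).toMonoidHom = π by
    rw [← QuotientGroup.eq_one_iff, QuotientGroup.mk_mul, QuotientGroup.mk_inv, mul_inv_eq_one]
    exact DFunLike.congr_fun h v
  refine FreeGroup.ext_hom _ _ fun i ↦ ?_
  by_cases hi : i = j
  · have h₁ : π (killLetter j p.1) = 1 := (QuotientGroup.eq_one_iff _).2 (map_mem_modKernel _ hp.1)
    have h₂ : π (killLetter j p.2) = 1 := (QuotientGroup.eq_one_iff _).2 (map_mem_modKernel _ hp.2)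
    simp [hi, transvection_of_self, h₁, h₂]
  · simp [transvection_of_ne hi]

/-- Invariance of `f : modKernel ι N →* A` under deletion of the letter `z` and under the maps
`rightTransvection j u` with `j ≠ z` and `u ∈ modKernel ι N` avoiding the letter `z`. -/
structure IsTransvectionInvariant {A : Type*} [CommGroup A] (z : ι) (f : modKernel ι N →* A) :
    Prop where
  apply_eq_of_killLetter : ∀ ⦃k k' : modKernel ι N⦄, (k' : FreeGroup ι) = killLetter z k →
    f k' = f k
  apply_eq_of_rightTransvection : ∀ ⦃j : ι⦄, j ≠ z → ∀ ⦃u : modKernel ι N⦄,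
    killLetter z u = u → ∀ ⦃k k' : modKernel ι N⦄,
      (k' : FreeGroup ι) = rightTransvection j u k → f k' = f k

namespace IsTransvectionInvariant

variable {A : Type*} [CommGroup A] {z : ι} {f : modKernel ι N →* A}

protected theorem conjTwist (hf : IsTransvectionInvariant z f) (g : FreeGroup ι) :
    IsTransvectionInvariant z (conjTwist g f) where
  apply_eq_of_killLetter k k' hk := by
    let l : modKernel ι N :=
      ⟨killLetter z (MulAut.conjNormal g k), map_mem_modKernel _ (SetLike.coe_mem _)⟩
    rw [conjTwist_apply, conjTwist_apply, ← hf.apply_eq_of_killLetter (k' := l) rfl]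
    refine (hf.apply_eq_of_killLetter ?_).symm
    simp [l, hk]
  apply_eq_of_rightTransvection j hj u hu k k' hk := by
    have hmem : rightTransvection j u g * g⁻¹ ∈ modKernel ι N :=
      transvection_mul_inv_mem_modKernel ⟨one_mem _, u.2⟩ j g
    calc
      conjTwist g f k' = conjTwist (rightTransvection j u g) f k' := by
        rw [← conjTwist_of_mem hmem f, conjTwist_conjTwist, inv_mul_cancel_right,
          conjTwist_of_mem hmem]
      _ = conjTwist g f k := hf.apply_eq_of_rightTransvection hj hu (by simp [hk])

theorem apply_conjNormal_of (hf : IsTransvectionInvariant z f) {i j : ι} (hij : i ≠ j) (hj : j ≠ z)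
    {u : modKernel ι N} (hz : killLetter z u = u) (hu : killLetter j u = u) :
    f (MulAut.conjNormal (of i) u) = f u := by
  let c : modKernel ι N := ⟨⁅(of j)⁻¹, of i⁆, commutator_mem_modKernel _ _⟩
  have hc : f (u⁻¹ * c * MulAut.conjNormal (of i) u) = f c := by
    refine hf.apply_eq_of_rightTransvection hj hz ?_
    have hj : rightTransvection j u (of j) = of j * u := by simp [transvection_of_self, hu]
    have hi : rightTransvection j u (of i) = of i := transvection_of_ne hij _
    simp only [c, commutatorElement_def, map_mul, map_inv, hi, hj, Subgroup.coe_mul,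
      InvMemClass.coe_inv, MulAut.conjNormal_apply]
    group
  rwa [map_mul, map_mul, map_inv, mul_right_comm, mul_eq_right, inv_mul_eq_one, eq_comm] at hc

theorem apply_conjNormal_of_pow (hf : IsTransvectionInvariant z f) {i j : ι} (hij : i ≠ j)
    (hj : j ≠ z) {u : modKernel ι N} (hz : killLetter z u = u) (hu : killLetter j u = u) (n : ℕ) :
    f (MulAut.conjNormal (of i ^ n) u) = f u := by
  induction n with
  | zero => simp
  | succ n ih =>
    rw [pow_succ, map_mul, MulAut.mul_apply]
    exact ((hf.conjTwist _).apply_conjNormal_of hij hj hz hu).trans ih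

variable [IsMulTorsionFree A]

theorem apply_pow_eq_one (hf : IsTransvectionInvariant z f) (hN : N ≠ 0) {a j j' : ι}
    (haz : a ≠ z) (hja : j ≠ a) (hjz : j ≠ z) (hj'a : j' ≠ a) (hj'z : j' ≠ z) (hjj' : j ≠ j') :
    f ⟨of a ^ N, of_pow_mem_modKernel a⟩ = 1 := by
  let u : modKernel ι N := ⟨of a ^ N, of_pow_mem_modKernel a⟩
  obtain ⟨p, hp, hfp⟩ := exists_mul_pow_eq_and_apply_eq_pow (f := f) (x := of j) (u := u)
    (hf.apply_conjNormal_of_pow hjj' hj'z (killLetter_of_pow haz N)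
      (killLetter_of_pow hj'a.symm N)) N
  have hpow := hf.apply_eq_of_rightTransvection hjz (u := u) (killLetter_of_pow haz N)
    (k := ⟨of j ^ N, of_pow_mem_modKernel j⟩) (k' := p * ⟨of j ^ N, of_pow_mem_modKernel j⟩) (by
      simp [hp, u, transvection_of_self, killLetter_of_ne hja.symm])
  rw [map_mul, mul_eq_right, hfp] at hpow
  exact (pow_eq_one_iff_left hN).1 hpow

theorem apply_commutator_eq_one (hf : IsTransvectionInvariant z f) (hN : N ≠ 0) {b d j : ι}
    (hbz : b ≠ z) (hdz : d ≠ z) (hjz : j ≠ z) (hbj : b ≠ j) (hdj : d ≠ j) :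
    f ⟨⁅of d, of b⁆, commutator_mem_modKernel _ _⟩ = 1 := by
  let u : modKernel ι N := ⟨⁅(of b)⁻¹, of d⁆, commutator_mem_modKernel _ _⟩
  let v : modKernel ι N := ⟨of b ^ N, of_pow_mem_modKernel b⟩
  have hu {l : ι} (hb : b ≠ l) (hd : d ≠ l) : killLetter l u = u := by
    simp [u, map_commutatorElement, killLetter_of_ne hb, killLetter_of_ne hd]
  have hconj (n : ℕ) := hf.apply_conjNormal_of_pow hbj hjz (hu hbz hdz) (hu hbj hdj) n
  obtain ⟨p, hp, hfp⟩ := exists_mul_pow_eq_and_apply_eq_pow hconj N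
  have hpv : p * v = MulAut.conjNormal (of d) v := by
    ext
    rw [Subgroup.coe_mul, hp, MulAut.conjNormal_apply, ← conj_pow]
    congr 1
    simp only [u, commutatorElement_def]
    group
  have hfv := hf.apply_conjNormal_of hdj hjz (u := v) (killLetter_of_pow hbz N)
    (killLetter_of_pow hbj N)
  rw [← hpv, map_mul, mul_eq_right, hfp, pow_eq_one_iff_left hN] at hfv
  rw [← hfv, ← hf.apply_conjNormal_of hbj hjz (hu hbz hdz) (hu hbj hdj)]
  congr 1
  ext
  simp only [u, commutatorElement_def, MulAut.conjNormal_apply]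
  group

end IsTransvectionInvariant

/- The class of invariant homomorphisms is stable under conjugation twists, so it suffices to treat
the normal generators. -/
theorem IsTransvectionInvariant.eq_one {A : Type*} [CommGroup A] [IsMulTorsionFree A] (hN : N ≠ 0)
    {z : Fin 4} {f : modKernel (Fin 4) N →* A} (hf : IsTransvectionInvariant z f) : f = 1 := by
  have htwo : ∀ i z : Fin 4, ∃ j j', j ≠ i ∧ j ≠ z ∧ j' ≠ i ∧ j' ≠ z ∧ j ≠ j' := by decide
  have hone : ∀ z b d : Fin 4, ∃ j, j ≠ z ∧ b ≠ j ∧ d ≠ j := by decide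
  refine modKernel_hom_eq_one (fun g i ↦ ?_) fun g d b ↦ ?_
  · by_cases hi : i = z
    · rw [← (hf.conjTwist g).apply_eq_of_killLetter (k' := 1) (by simp [hi]), map_one]
    · obtain ⟨j, j', hji, hjz, hj'i, hj'z, hjj'⟩ := htwo i z
      exact (hf.conjTwist g).apply_pow_eq_one hN hi hji hjz hj'i hj'z hjj'
  · by_cases h : d = z ∨ b = z
    · rw [← (hf.conjTwist g).apply_eq_of_killLetter (k' := 1) (by
        rcases h with rfl | rfl <;> simp [map_commutatorElement]), map_one]
    · obtain ⟨hdz, hbz⟩ := not_or.1 h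
      obtain ⟨j, hjz, hbj, hdj⟩ := hone z b d
      exact (hf.conjTwist g).apply_commutator_eq_one hN hbz hdz hjz hbj hdj

variable (ι) in
/-- The group generated by the transvections by elements of `modKernel ι N`. -/
def transvectionGroup (N : ℕ) : Subgroup (MulAut (FreeGroup ι)) :=
  ⨆ z, ((modKernel ι N).prod (modKernel ι N)).map (transvection z)

theorem transvection_mem_transvectionGroup (z : ι) {p : FreeGroup ι × FreeGroup ι}
    (hp : p ∈ (modKernel ι N).prod (modKernel ι N)) :
    transvection z p ∈ transvectionGroup ι N :=
  Subgroup.mem_iSup_of_mem z (Subgroup.mem_map_of_mem _ hp)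

/-- `transvection z` as a homomorphism into `transvectionGroup ι N`. -/
def transvectionIn (z : ι) : modKernel ι N × modKernel ι N →* transvectionGroup ι N :=
  ((transvection z).comp ((modKernel ι N).subtype.prodMap (modKernel ι N).subtype)).codRestrict _
    fun k ↦ transvection_mem_transvectionGroup z ⟨k.1.2, k.2.2⟩

theorem iSup_range_transvectionIn : ⨆ z, (transvectionIn (ι := ι) (N := N) z).range = ⊤ := by
  refine Subgroup.map_injective (transvectionGroup ι N).subtype_injective ?_
  rw [Subgroup.map_iSup, ← MonoidHom.range_eq_map, Subgroup.range_subtype]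
  refine iSup_congr fun z ↦ ?_
  rw [MonoidHom.map_range]
  ext θ
  constructor
  · rintro ⟨k, rfl⟩
    exact ⟨(k.1, k.2), ⟨k.1.2, k.2.2⟩, rfl⟩
  · rintro ⟨p, hp, rfl⟩
    exact ⟨(⟨p.1, hp.1⟩, ⟨p.2, hp.2⟩), rfl⟩

instance transvectionGroup_fg [Finite ι] [NeZero N] : Group.FG (transvectionGroup ι N) := by
  have := modKernel_finiteIndex (ι := ι) (NeZero.ne N)
  rw [Group.fg_def, ← iSup_range_transvectionIn]
  exact Subgroup.FG.iSup _ fun z ↦ (Group.fg_iff_subgroup_fg _).1 inferInstance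

theorem transvectionIn_congr_killLetter {z : ι} {k k' : modKernel ι N × modKernel ι N}
    (h₁ : (k'.1 : FreeGroup ι) = killLetter z k.1) (h₂ : (k'.2 : FreeGroup ι) = killLetter z k.2) :
    transvectionIn z k' = transvectionIn z k :=
  Subtype.ext (transvection_congr (by simp [h₁]) (by simp [h₂]))

theorem map_transvectionIn_eq_of_rightTransvection {A : Type*} [CommGroup A]
    (φ : transvectionGroup ι N →* A) {z j : ι} (h : j ≠ z) {u : modKernel ι N}
    (hu : killLetter z u = u) {k k' : modKernel ι N × modKernel ι N}
    (h₁ : (k'.1 : FreeGroup ι) = rightTransvection j u k.1)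
    (h₂ : (k'.2 : FreeGroup ι) = rightTransvection j u k.2) :
    φ (transvectionIn z k') = φ (transvectionIn z k) := by
  have hconj : transvectionIn j (1, u) * transvectionIn z k * (transvectionIn j (1, u))⁻¹ =
      transvectionIn z k' := by
    refine Subtype.ext ((transvection_mul_transvection_mul_inv h.symm (map_one _) hu _).trans ?_)
    exact congrArg (transvection z) (Prod.ext h₁.symm h₂.symm)
  rw [← hconj, map_mul, map_mul, map_inv, mul_inv_cancel_comm]

theorem subsingleton_transvectionGroup_hom {A : Type*} [CommGroup A] [IsMulTorsionFree A]
    (hN : N ≠ 0) : Subsingleton (transvectionGroup (Fin 4) N →* A) := by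
  refine subsingleton_of_forall_eq 1 fun φ ↦ ?_
  have hleft (z) : (φ.comp (transvectionIn z)).comp (MonoidHom.inl _ _) = 1 :=
    IsTransvectionInvariant.eq_one hN
      { apply_eq_of_killLetter _ _ hk :=
          congrArg φ (transvectionIn_congr_killLetter hk (map_one _).symm)
        apply_eq_of_rightTransvection _ hj _ hu _ _ hk :=
          map_transvectionIn_eq_of_rightTransvection φ hj hu hk (map_one _).symm }
  have hright (z) : (φ.comp (transvectionIn z)).comp (MonoidHom.inr _ _) = 1 :=
    IsTransvectionInvariant.eq_one hN
      { apply_eq_of_killLetter _ _ hk :=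
          congrArg φ (transvectionIn_congr_killLetter (map_one _).symm hk)
        apply_eq_of_rightTransvection _ hj _ hu _ _ hk :=
          map_transvectionIn_eq_of_rightTransvection φ hj hu (map_one _).symm hk }
  have hφ (z) : φ.comp (transvectionIn z) = 1 := by
    rw [← MonoidHom.coprod_unique (φ.comp (transvectionIn z)), hleft, hright]
    exact MonoidHom.ext fun _ ↦ one_mul 1
  rw [← MonoidHom.ker_eq_top_iff, eq_top_iff, ← iSup_range_transvectionIn]
  exact iSup_le fun z ↦ (MonoidHom.range_le_ker_iff _ _).2 (hφ z)

end ModKernel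

/-! ### A normal subgroup of the congruence subgroup of `Aut(F₄)` and its finite characters -/

local notation "F₄" => FreeGroup (Fin 4)

section ElementarySubgroup

open FreeGroup (of)
open scoped commutatorElement

/-- Normal generators of `elementarySubgroup m`. -/
def elementaryGenerators (m : ℕ) : Set (MulAut F₄) :=
  {g | (∃ z i, i ≠ z ∧ g = rightTransvection z (of i ^ m)) ∨
    (∃ z i j, i ≠ z ∧ j ≠ z ∧ i ≠ j ∧ g = rightTransvection z ⁅of i, of j⁆) ∨
    ∃ z i, i ≠ z ∧ g = partialConj z (of i)}

/-- The normal subgroup of `Aut(F₄)` generated by the right transvections by `m`-th powers of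
letters and by commutators of letters, together with the partial conjugations. It acts trivially on
`(ℤ/m)⁴`. -/
def elementarySubgroup (m : ℕ) : Subgroup (MulAut F₄) :=
  Subgroup.normalClosure (elementaryGenerators m)

instance (m : ℕ) : (elementarySubgroup m).Normal := Subgroup.normalClosure_normal

variable {m : ℕ}

theorem rightTransvection_mem_elementarySubgroup (z : Fin 4) {w : F₄}
    (hw : w ∈ modKernel (Fin 4) m) : rightTransvection z w ∈ elementarySubgroup m := by
  let K := (elementarySubgroup m).comap (rightTransvection z)
  have : K.Normal := ⟨fun w hw g ↦ by
    rw [Subgroup.mem_comap, ← conjOthers_mul_rightTransvection_mul_inv]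
    exact Subgroup.Normal.conj_mem (H := elementarySubgroup m) inferInstance _ hw (conjOthers z g)⟩
  refine modKernel_le (K := K) (fun i ↦ ?_) (fun i j ↦ ?_) hw <;> rw [Subgroup.mem_comap]
  · by_cases hi : i = z
    · rw [rightTransvection_eq_one (by simp [hi])]
      exact one_mem _
    · exact Subgroup.subset_normalClosure (.inl ⟨z, i, hi, rfl⟩)
  · by_cases h : i = z ∨ j = z ∨ i = j
    · rw [rightTransvection_eq_one (by rcases h with rfl | rfl | rfl <;> simp)]
      exact one_mem _
    · obtain ⟨hi, hj, hij⟩ := by simpa only [not_or] using h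
      exact Subgroup.subset_normalClosure (.inr (.inl ⟨z, i, j, hi, hj, hij, rfl⟩))

theorem apply_mem_of_forall_of_mem {ι G : Type*} [Group G] {f : FreeGroup ι →* G} {P : Subgroup G}
    (h : ∀ i, f (of i) ∈ P) (w : FreeGroup ι) : f w ∈ P := by
  induction w using FreeGroup.induction_on with
  | C1 => exact map_one f ▸ one_mem P
  | of i => exact h i
  | inv_of i _ => exact map_inv f (of i) ▸ inv_mem (h i)
  | mul u v hu hv => exact map_mul f u v ▸ mul_mem hu hv

theorem partialConj_mem_elementarySubgroup (z : Fin 4) (w : F₄) :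
    partialConj z w ∈ elementarySubgroup m := by
  refine apply_mem_of_forall_of_mem (fun i ↦ ?_) w
  by_cases hi : i = z
  · have : partialConj z (of i) = 1 :=
      (transvection_congr (q := 1) (by simp [hi]) (by simp [hi])).trans (map_one _)
    exact this ▸ one_mem _
  · exact Subgroup.subset_normalClosure (.inr (.inr ⟨z, i, hi, rfl⟩))

theorem leftTransvection_mem_elementarySubgroup (z : Fin 4) {w : F₄}
    (hw : w ∈ modKernel (Fin 4) m) : leftTransvection z w ∈ elementarySubgroup m := by
  rw [← inv_mul_cancel_left (rightTransvection z w) (leftTransvection z w),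
    right_mul_left_eq_partialConj]
  exact mul_mem (inv_mem (rightTransvection_mem_elementarySubgroup z hw))
    (partialConj_mem_elementarySubgroup z w)

theorem conjOthers_of_eq_mul {z i j k : Fin 4} (hi : i ≠ z) (hjz : j ≠ z) (hji : j ≠ i)
    (hkz : k ≠ z) (hki : k ≠ i) (hkj : k ≠ j) :
    conjOthers z (of i) = partialConj j (of i)⁻¹ * partialConj k (of i)⁻¹ := by
  have hcases : ∀ z i j k : Fin 4, i ≠ z → j ≠ z → j ≠ i → k ≠ z → k ≠ i → k ≠ j →
    ∀ l, l = z ∨ l = i ∨ l = j ∨ l = k := by decide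
  refine mulAut_freeGroup_ext fun l ↦ ?_
  rcases hcases z i j k hi hjz hji hkz hki hkj l with rfl | rfl | rfl | rfl
  · simp [conjOthers_of_self, transvection_of_ne hjz.symm, transvection_of_ne hkz.symm]
  · simp [conjOthers_of_ne hi, killLetter_of_ne hi, transvection_of_ne hji.symm,
      transvection_of_ne hki.symm]
  · simp [conjOthers_of_ne hjz, killLetter_of_ne hi, transvection_of_ne hkj.symm,
      transvection_of_self, killLetter_of_ne hji.symm]
  · simp [conjOthers_of_ne hkz, killLetter_of_ne hi, transvection_of_ne hkj,
      transvection_of_ne hji.symm, transvection_of_self, killLetter_of_ne hki.symm]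

theorem conjOthers_mem_elementarySubgroup (z : Fin 4) (w : F₄) :
    conjOthers z w ∈ elementarySubgroup m := by
  have hletters : ∀ z i : Fin 4, ∃ j k, j ≠ z ∧ j ≠ i ∧ k ≠ z ∧ k ≠ i ∧ k ≠ j := by decide
  refine apply_mem_of_forall_of_mem (fun i ↦ ?_) w
  by_cases hi : i = z
  · subst hi
    have : conjOthers i (of i) = 1 := mulAut_freeGroup_ext fun l ↦ by
      by_cases hl : l = i
      · simp [hl, conjOthers_of_self]
      · simp [conjOthers_of_ne hl]
    exact this ▸ one_mem _
  · obtain ⟨j, k, hjz, hji, hkz, hki, hkj⟩ := hletters z i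
    rw [conjOthers_of_eq_mul hi hjz hji hkz hki hkj]
    exact mul_mem (partialConj_mem_elementarySubgroup _ _) (partialConj_mem_elementarySubgroup _ _)

/-- `rightTransvection z` as a homomorphism into `elementarySubgroup m`. -/
def rightElementary (m : ℕ) (z : Fin 4) : modKernel (Fin 4) m →* elementarySubgroup m :=
  ((rightTransvection z).comp (modKernel (Fin 4) m).subtype).codRestrict _ fun k ↦
    rightTransvection_mem_elementarySubgroup z k.2

variable {C : Type*} [CommGroup C] {χ : elementarySubgroup m →* C}

theorem conjTwist_comp_rightElementary (χ : elementarySubgroup m →* C) (z : Fin 4) (g : F₄) :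
    conjTwist g (χ.comp (rightElementary m z)) = χ.comp (rightElementary m z) := by
  ext k
  have hconj : rightElementary m z (MulAut.conjNormal g k) =
      MulAut.conjNormal (conjOthers z g) (rightElementary m z k) :=
    Subtype.ext (conjOthers_mul_rightTransvection_mul_inv z g k).symm
  rw [conjTwist_apply, MonoidHom.comp_apply, hconj]
  exact DFunLike.congr_fun (conjTwist_of_mem (conjOthers_mem_elementarySubgroup z g) χ) _

/-- The value of a character on the right transvection by a commutator. -/
def transvectionPairing (χ : elementarySubgroup m →* C) (z : Fin 4) (v w : F₄) : C :=
  χ (rightElementary m z ⟨⁅v, w⁆, commutator_mem_modKernel v w⟩)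

theorem transvectionPairing_mul_left (χ : elementarySubgroup m →* C) (z : Fin 4) (u v w : F₄) :
    transvectionPairing χ z (u * v) w =
      transvectionPairing χ z u w * transvectionPairing χ z v w := by
  let c (v : F₄) : modKernel (Fin 4) m := ⟨⁅v, w⁆, commutator_mem_modKernel v w⟩
  have hc : c (u * v) = MulAut.conjNormal u (c v) * c u := by
    ext
    simp only [c, commutatorElement_def, Subgroup.coe_mul, MulAut.conjNormal_apply]
    group
  have hconj := DFunLike.congr_fun (conjTwist_comp_rightElementary χ z u) (c v)
  calc
    transvectionPairing χ z (u * v) w =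
        χ (rightElementary m z (MulAut.conjNormal u (c v))) * χ (rightElementary m z (c u)) := by
      rw [← map_mul, ← map_mul, ← hc, transvectionPairing]
    _ = _ := by
      rw [mul_comm]
      exact congrArg _ hconj

theorem transvectionPairing_one_left (χ : elementarySubgroup m →* C) (z : Fin 4) (w : F₄) :
    transvectionPairing χ z 1 w = 1 := by
  simpa using transvectionPairing_mul_left χ z 1 1 w

theorem transvectionPairing_pow_left (χ : elementarySubgroup m →* C) (z : Fin 4) (v w : F₄)
    (n : ℕ) : transvectionPairing χ z (v ^ n) w = transvectionPairing χ z v w ^ n := by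
  induction n with
  | zero => rw [pow_zero, pow_zero, transvectionPairing_one_left]
  | succ n ih => rw [pow_succ, transvectionPairing_mul_left, ih, pow_succ]

theorem transvectionPairing_swap (χ : elementarySubgroup m →* C) (z : Fin 4) (v w : F₄) :
    transvectionPairing χ z w v = (transvectionPairing χ z v w)⁻¹ := by
  rw [transvectionPairing, transvectionPairing, ← map_inv, ← map_inv]
  congr 2
  ext
  simp [commutatorElement_inv]

theorem transvectionPairing_self (χ : elementarySubgroup m →* C) (z : Fin 4) (v : F₄) :
    transvectionPairing χ z v v = 1 := by
  rw [transvectionPairing, ← map_one χ, ← map_one (rightElementary m z)]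
  congr 2
  ext
  simp

theorem transvectionPairing_of_self_left (χ : elementarySubgroup m →* C) (z : Fin 4) (v : F₄) :
    transvectionPairing χ z (of z) v = 1 := by
  have : rightElementary m z ⟨⁅of z, v⁆, commutator_mem_modKernel _ v⟩ = 1 :=
    Subtype.ext (rightTransvection_eq_one (by simp [map_commutatorElement]))
  rw [transvectionPairing, this, map_one]

theorem transvectionPairing_conjTwist {z j : Fin 4} (h : j ≠ z) {u : F₄} (hu : killLetter z u = u)
    (v w : F₄) : transvectionPairing (conjTwist (rightTransvection j u) χ) z v w =
      transvectionPairing χ z (rightTransvection j u v) (rightTransvection j u w) := by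
  refine congrArg χ (Subtype.ext ?_)
  refine (rightTransvection_mul_rightTransvection_mul_inv h.symm hu _).trans ?_
  exact congrArg (rightTransvection z) (map_commutatorElement _ v w)

theorem transvectionPairing_conjTwist_self (z : Fin 4) (u v w : F₄) :
    transvectionPairing (conjTwist (rightTransvection z u) χ) z v w =
      transvectionPairing χ z v w := by
  let k : modKernel (Fin 4) m := ⟨⁅v, w⁆, commutator_mem_modKernel v w⟩
  have hconj : MulAut.conjNormal (rightTransvection z u) (rightElementary m z k) =
      rightElementary m z (MulAut.conjNormal u k) :=
    Subtype.ext (by simp [rightElementary, ← map_mul, ← map_inv])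
  rw [transvectionPairing, conjTwist_apply, hconj]
  exact DFunLike.congr_fun (conjTwist_comp_rightElementary χ z u) k

theorem transvectionPairing_conjTwist_of_ne {z j : Fin 4} {u v w : F₄} (h : j ≠ z)
    (hu : killLetter z u = u) (hv : killLetter j v = v) (hw : killLetter j w = w) :
    transvectionPairing (conjTwist (rightTransvection j u) χ) z v w =
      transvectionPairing χ z v w := by
  rw [transvectionPairing_conjTwist h hu]
  simp only [transvection_apply_of_killLetter_eq hv, transvection_apply_of_killLetter_eq hw,
    MonoidHom.comp_apply]

theorem transvectionPairing_conjTwist_left {z i j k : Fin 4} (hi : i ≠ z) (hk : k ≠ z)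
    (hki : k ≠ i) (hj : j ≠ i) (s : ℕ) :
    transvectionPairing (conjTwist (rightTransvection i (of k ^ s)) χ) z (of i) (of j) =
      transvectionPairing χ z (of i) (of j) * transvectionPairing χ z (of k) (of j) ^ s := by
  rw [transvectionPairing_conjTwist hi (killLetter_of_pow hk s), ← transvectionPairing_pow_left,
    ← transvectionPairing_mul_left]
  simp [transvection_of_self, transvection_of_ne hj, killLetter_of_ne hki]

theorem transvectionPairing_conjTwist_transpose {z k : Fin 4} {v w : F₄} (hk : k ≠ z)
    (hvz : killLetter z ⁅v, w⁆ = ⁅v, w⁆) (hvk : killLetter k ⁅v, w⁆ = ⁅v, w⁆) (s : ℕ) :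
    transvectionPairing (conjTwist (rightTransvection k (of z ^ s)) χ) z v w =
      transvectionPairing χ z v w * ((transvectionPairing χ k v w)⁻¹) ^ s := by
  let u : modKernel (Fin 4) m := ⟨⁅v, w⁆, commutator_mem_modKernel v w⟩
  obtain ⟨p, hp, hχp⟩ := exists_mul_pow_eq_and_apply_eq_pow (f := χ.comp (rightElementary m k))
    (x := of z) (u := u)
    (fun i ↦ DFunLike.congr_fun (conjTwist_comp_rightElementary χ k (of z ^ i)) u) s
  have hconj : MulAut.conjNormal (rightTransvection k (of z ^ s)) (rightElementary m z u) =
      (rightElementary m k p)⁻¹ * rightElementary m z u := by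
    let K := rightTransvection k
    let Z := rightTransvection z ⁅v, w⁆
    have hZ : Z (of z ^ s) = p * of z ^ s := by
      rw [hp, map_pow, rightTransvection_of_self, hvz]
    have hconjZ : Z * K (of z ^ s) * Z⁻¹ = K p * K (of z ^ s) := by
      rw [← map_mul, ← hZ]
      exact rightTransvection_mul_rightTransvection_mul_inv hk hvk _
    refine Subtype.ext (eq_inv_mul_iff_mul_eq.2 ?_)
    calc
      K p * (K (of z ^ s) * Z * (K (of z ^ s))⁻¹) = K p * K (of z ^ s) * Z * (K (of z ^ s))⁻¹ := by
        group
      _ = Z := by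
        rw [← hconjZ]
        group
  rw [transvectionPairing, conjTwist_apply, hconj, map_mul, map_inv, mul_comm, inv_pow]
  exact congrArg (fun c ↦ _ * c⁻¹) hχp

end ElementarySubgroup

section NormalizedCharacter

open FreeGroup (of)

variable {m : ℕ} {C : Type*} [CommGroup C]

/-- All twists of `χ` have pairings of order at most `o` on pairs of distinct letters. -/
def TwistOrdersLE (o : ℕ) (χ : elementarySubgroup m →* C) : Prop :=
  ∀ g z i j, i ≠ z → j ≠ z → i ≠ j →
    orderOf (transvectionPairing (conjTwist g χ) z (of i) (of j)) ≤ o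

theorem TwistOrdersLE.conjTwist {o : ℕ} {χ : elementarySubgroup m →* C} (h : TwistOrdersLE o χ)
    (g : MulAut F₄) : TwistOrdersLE o (conjTwist g χ) := fun g' z i j hi hj hij ↦ by
  rw [conjTwist_conjTwist]
  exact h _ z i j hi hj hij

theorem transvectionPairing_conjTwist_perm (χ : elementarySubgroup m →* C)
    (π : Equiv.Perm (Fin 4)) (z i j : Fin 4) :
    transvectionPairing (conjTwist (FreeGroup.freeGroupCongr π : MulAut F₄) χ) z (of i) (of j) =
      transvectionPairing χ (π z) (of (π i)) (of (π j)) := by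
  refine congrArg χ (Subtype.ext ?_)
  refine (mul_rightTransvection_mul_inv_of_perm π z _).trans ?_
  exact congrArg (rightTransvection (π z)) (by simp [map_commutatorElement])

theorem exists_twistOrdersLE [Finite C] (χ : elementarySubgroup m →* C) :
    ∃ g, TwistOrdersLE (orderOf (transvectionPairing (conjTwist g χ) 0 (of 2) (of 3))) χ := by
  have hperm : ∀ z i j : Fin 4, i ≠ z → j ≠ z → i ≠ j →
    ∃ π : Equiv.Perm (Fin 4), π 0 = z ∧ π 2 = i ∧ π 3 = j := by decide
  obtain ⟨_, ⟨g, rfl⟩, hg⟩ := Set.exists_max_image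
    (Set.range fun g ↦ transvectionPairing (conjTwist g χ) 0 (of 2) (of 3)) orderOf
    (Set.toFinite _) (Set.range_nonempty _)
  refine ⟨g, fun g' z i j hi hj hij ↦ ?_⟩
  obtain ⟨π, rfl, rfl, rfl⟩ := hperm z i j hi hj hij
  rw [← transvectionPairing_conjTwist_perm, conjTwist_conjTwist]
  exact hg _ ⟨_, rfl⟩

variable [IsCyclic C] [Finite C] {χ : elementarySubgroup m →* C}

theorem exists_mul_pow_eq_of_mem_zpowers {G : Type*} [Group G] [Finite G] {a b c : G}
    (hb : b ∈ Subgroup.zpowers a) (hc : c ∈ Subgroup.zpowers a) : ∃ s : ℕ, b * a ^ s = c := by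
  obtain ⟨s, hs⟩ := mem_powers_iff_mem_zpowers.2 (mul_mem (inv_mem hb) hc)
  exact ⟨s, eq_inv_mul_iff_mul_eq.1 hs⟩

theorem TwistOrdersLE.transvectionPairing_mem_zpowers {z i j k : Fin 4}
    (h : TwistOrdersLE (orderOf (transvectionPairing χ z (of i) (of j))) χ) (hi : i ≠ z)
    (hj : j ≠ z) (hij : i ≠ j) (hk : k ≠ z) : transvectionPairing χ z (of k) (of j) ∈
      Subgroup.zpowers (transvectionPairing χ z (of i) (of j)) := by
  by_cases hki : k = i
  · exact hki ▸ Subgroup.mem_zpowers _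
  refine mem_zpowers_of_forall_orderOf_mul_pow_le fun s ↦ ?_
  rw [← transvectionPairing_conjTwist_left hi hk hki hij.symm s]
  exact h _ z i j hi hj hij

theorem TwistOrdersLE.transvectionPairing_transpose_mem_zpowers {z i j k : Fin 4}
    (h : TwistOrdersLE (orderOf (transvectionPairing χ z (of i) (of j))) χ) (hi : i ≠ z)
    (hj : j ≠ z) (hij : i ≠ j) (hk : k ≠ z) (hik : i ≠ k) (hjk : j ≠ k) :
    transvectionPairing χ k (of i) (of j) ∈
      Subgroup.zpowers (transvectionPairing χ z (of i) (of j)) := by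
  rw [← inv_mem_iff]
  refine mem_zpowers_of_forall_orderOf_mul_pow_le fun s ↦ ?_
  rw [← transvectionPairing_conjTwist_transpose hk (killLetter_commutator hi hj)
    (killLetter_commutator hik hjk) s]
  exact h _ z i j hi hj hij

theorem exists_conjTwist_pairing_zero_eq {a : C} (h : TwistOrdersLE (orderOf a) χ)
    (ha : transvectionPairing χ 0 (of 2) (of 3) = a) :
    ∃ g, ∀ i j : Fin 4, 0 < i → i < j →
      transvectionPairing (conjTwist g χ) 0 (of i) (of j) = a := by
  have h13 := TwistOrdersLE.transvectionPairing_mem_zpowers (z := 0) (i := 2) (j := 3) (k := 1)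
    (ha ▸ h) (by decide) (by decide) (by decide) (by decide)
  rw [ha] at h13
  obtain ⟨s, hs⟩ := exists_mul_pow_eq_of_mem_zpowers h13 (Subgroup.mem_zpowers a)
  let ψ := conjTwist (rightTransvection 1 (of 2 ^ s)) χ
  have hψ23 : transvectionPairing ψ 0 (of 2) (of 3) = a := by
    rw [transvectionPairing_conjTwist_of_ne (by decide) (killLetter_of_pow (by decide) s)
      (killLetter_of_ne (by decide)) (killLetter_of_ne (by decide)), ha]
  have hψ13 : transvectionPairing ψ 0 (of 1) (of 3) = a := by
    rw [transvectionPairing_conjTwist_left (by decide) (by decide) (by decide) (by decide), ha, hs]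
  have hψ32 : transvectionPairing ψ 0 (of 3) (of 2) = a⁻¹ := by
    rw [transvectionPairing_swap, hψ23]
  have h12 := TwistOrdersLE.transvectionPairing_mem_zpowers (χ := ψ) (z := 0) (i := 3) (j := 2)
    (k := 1) (by rw [hψ32, orderOf_inv]; exact h.conjTwist _) (by decide) (by decide) (by decide)
    (by decide)
  rw [hψ32] at h12
  obtain ⟨s', hs'⟩ := exists_mul_pow_eq_of_mem_zpowers h12
    (inv_mem_iff.1 (Subgroup.mem_zpowers a⁻¹))
  have hcases : ∀ i j : Fin 4, 0 < i → i < j →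
    (i = 1 ∧ j = 2) ∨ (i = 1 ∧ j = 3) ∨ (i = 2 ∧ j = 3) := by decide
  refine ⟨rightTransvection 1 (of 2 ^ s) * rightTransvection 1 (of 3 ^ s'), fun i j hi hij ↦ ?_⟩
  rw [← conjTwist_conjTwist]
  rcases hcases i j hi hij with ⟨rfl, rfl⟩ | ⟨rfl, rfl⟩ | ⟨rfl, rfl⟩
  · rw [transvectionPairing_conjTwist_left (by decide) (by decide) (by decide) (by decide), hψ32,
      hs']
  · rw [transvectionPairing_conjTwist_left (by decide) (by decide) (by decide) (by decide), hψ13,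
      transvectionPairing_self, one_pow, mul_one]
  · rw [transvectionPairing_conjTwist_of_ne (by decide) (killLetter_of_pow (by decide) s')
      (killLetter_of_ne (by decide)) (killLetter_of_ne (by decide)), hψ23]

theorem exists_conjTwist_pairing_eq_pairing_zero {k i j : Fin 4} (hk : k ≠ 0) (hi : i ≠ 0)
    (hj : j ≠ 0) (hij : i ≠ j) (hik : i ≠ k) (hjk : j ≠ k)
    (h : TwistOrdersLE (orderOf (transvectionPairing χ 0 (of i) (of j))) χ) :
    ∃ g, (∀ p q, transvectionPairing (conjTwist g χ) 0 p q = transvectionPairing χ 0 p q) ∧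
      (∀ z p q, z ≠ 0 → z ≠ k → p ≠ 0 → q ≠ 0 →
        transvectionPairing (conjTwist g χ) z (of p) (of q) =
          transvectionPairing χ z (of p) (of q)) ∧
      transvectionPairing (conjTwist g χ) k (of i) (of j) =
        transvectionPairing χ 0 (of i) (of j) := by
  set a := transvectionPairing χ 0 (of i) (of j) with ha
  obtain ⟨s, hs⟩ := exists_mul_pow_eq_of_mem_zpowers (a := a⁻¹) (c := a)
    (by rw [Subgroup.zpowers_inv]
        exact h.transvectionPairing_transpose_mem_zpowers hi hj hij hk hik hjk)
    (inv_mem_iff.1 (Subgroup.mem_zpowers a⁻¹))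
  refine ⟨rightTransvection 0 (of k ^ s), fun p q ↦ ?_, fun z p q hz hzk hp hq ↦ ?_, ?_⟩
  · exact transvectionPairing_conjTwist_self 0 _ p q
  · exact transvectionPairing_conjTwist_of_ne hz.symm (killLetter_of_pow hzk.symm s)
      (killLetter_of_ne hp) (killLetter_of_ne hq)
  · rw [transvectionPairing_conjTwist_transpose hk.symm (killLetter_commutator hik hjk)
      (killLetter_commutator hi hj), ← ha, hs]

/-- Normal form of a character up to twists: the pairings on the letters `1`, `2`, `3` all have the
same value `a`, and `a` has maximal order among the pairings of all twists. -/
structure IsNormalized (χ : elementarySubgroup m →* C) (a : C) : Prop where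
  twistOrdersLE : TwistOrdersLE (orderOf a) χ
  pairing_eq : ∀ z i j : Fin 4, 0 < i → i < j → i ≠ z → j ≠ z →
    transvectionPairing χ z (of i) (of j) = a

/- Starting from a twist realising the maximal order, the pairings at `0` are equalised first;
twists by right transvections at `0` then equalise those at `1`, `2` and `3` in turn. -/
theorem exists_isNormalized (χ : elementarySubgroup m →* C) :
    ∃ g a, IsNormalized (conjTwist g χ) a := by
  obtain ⟨g₀, h⟩ := exists_twistOrdersLE χ
  set a := transvectionPairing (conjTwist g₀ χ) 0 (of 2) (of 3) with ha
  suffices hstep : ∀ k : Fin 4, ∃ g, ∀ z ≤ k, ∀ i j : Fin 4, 0 < i → i < j → i ≠ z → j ≠ z →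
      transvectionPairing (conjTwist g χ) z (of i) (of j) = a by
    obtain ⟨g, hg⟩ := hstep (Fin.last 3)
    exact ⟨g, a, h.conjTwist g, fun z ↦ hg z z.le_last⟩
  intro k
  induction k using Fin.induction with
  | zero =>
    obtain ⟨g, hg⟩ := exists_conjTwist_pairing_zero_eq (h.conjTwist g₀) ha.symm
    rw [conjTwist_conjTwist] at hg
    exact ⟨g₀ * g, fun z hz i j hi hij _ _ ↦ Fin.le_zero_iff.1 hz ▸ hg i j hi hij⟩
  | succ k ih =>
    obtain ⟨g, hg⟩ := ih
    have hpair : ∀ k : Fin 3, ∃ i j : Fin 4, 0 < i ∧ i < j ∧ i ≠ k.succ ∧ j ≠ k.succ ∧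
      ∀ p q : Fin 4, 0 < p → p < q → p ≠ k.succ → q ≠ k.succ → p = i ∧ q = j := by decide
    obtain ⟨i, j, hi, hij, hik, hjk, huniq⟩ := hpair k
    have hzero : ∀ p q : Fin 4, 0 < p → p < q →
        transvectionPairing (conjTwist g χ) 0 (of p) (of q) = a := fun p q hp hpq ↦
      hg 0 (Fin.zero_le _) p q hp hpq hp.ne' (hp.trans hpq).ne'
    obtain ⟨g', hg'zero, hg'ne, hg'k⟩ := exists_conjTwist_pairing_eq_pairing_zero
      (χ := conjTwist g χ) k.succ_ne_zero hi.ne' (hi.trans hij).ne' hij.ne hik hjk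
      (by rw [hzero i j hi hij]; exact h.conjTwist g)
    refine ⟨g * g', fun z hz p q hp hpq hpz hqz ↦ ?_⟩
    rw [← conjTwist_conjTwist]
    by_cases hzk : z = k.succ
    · subst hzk
      obtain ⟨rfl, rfl⟩ := huniq p q hp hpq hpz hqz
      rw [hg'k, hzero p q hp hpq]
    · by_cases hz0 : z = 0
      · rw [hz0, hg'zero, hzero p q hp hpq]
      · rw [hg'ne z p q hz0 hzk hp.ne' (hp.trans hpq).ne']
        exact hg z (Fin.le_castSucc_iff.2 (lt_of_le_of_ne hz hzk)) p q hp hpq hpz hqz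

namespace IsNormalized

variable {a : C}

omit [IsCyclic C] [Finite C] in
theorem pairing_eq_or_eq_inv (h : IsNormalized χ a) {z i j : Fin 4} (hi : i ≠ 0) (hj : j ≠ 0)
    (hij : i ≠ j) (hiz : i ≠ z) (hjz : j ≠ z) :
    transvectionPairing χ z (of i) (of j) = a ∨ transvectionPairing χ z (of i) (of j) = a⁻¹ := by
  rcases hij.lt_or_gt with hij | hji
  · exact .inl (h.pairing_eq z i j (Fin.pos_iff_ne_zero.2 hi) hij hiz hjz)
  · refine .inr ?_
    rw [transvectionPairing_swap, h.pairing_eq z j i (Fin.pos_iff_ne_zero.2 hj) hji hjz hiz]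

theorem pairing_mem_zpowers (h : IsNormalized χ a) (z i j : Fin 4) :
    transvectionPairing χ z (of i) (of j) ∈ Subgroup.zpowers a := by
  have hne_zero (i : Fin 4) {j : Fin 4} (hj : j ≠ 0) :
      transvectionPairing χ z (of i) (of j) ∈ Subgroup.zpowers a := by
    by_cases hjz : j = z
    · rw [hjz, transvectionPairing_swap, transvectionPairing_of_self_left, inv_one]
      exact one_mem _
    by_cases hiz : i = z
    · rw [hiz, transvectionPairing_of_self_left]
      exact one_mem _
    have hthird : ∀ j z : Fin 4, ∃ k, k ≠ 0 ∧ k ≠ j ∧ k ≠ z := by decide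
    obtain ⟨k, hk0, hkj, hkz⟩ := hthird j z
    have hmax (h' : orderOf (transvectionPairing χ z (of k) (of j)) = orderOf a) :=
      TwistOrdersLE.transvectionPairing_mem_zpowers (h' ▸ h.twistOrdersLE) hkz hjz hkj hiz
    rcases h.pairing_eq_or_eq_inv hk0 hj hkj hkz hjz with hkj | hkj
    · simpa only [hkj, true_imp_iff] using hmax
    · simpa only [hkj, orderOf_inv, Subgroup.zpowers_inv, true_imp_iff] using hmax
  by_cases hj : j = 0
  · by_cases hi : i = 0
    · rw [hi, hj, transvectionPairing_self]
      exact one_mem _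
    · rw [transvectionPairing_swap]
      exact inv_mem (hne_zero j hi)
  · exact hne_zero i hj

end IsNormalized
end NormalizedCharacter

section TransvectionKernel

open FreeGroup (of)
open scoped commutatorElement

variable {m e : ℕ} {C : Type*} [CommGroup C] {χ : elementarySubgroup m →* C}

theorem transvectionGroup_mul_le_elementarySubgroup (m e : ℕ) :
    transvectionGroup (Fin 4) (m * e) ≤ elementarySubgroup m := by
  refine iSup_le fun z ↦ Subgroup.map_le_iff_le_comap.2 ?_
  rintro ⟨u, w⟩ ⟨hu, hw⟩
  have hsplit : transvection z (u, w) = leftTransvection z u * rightTransvection z w := by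
    simp [← map_mul]
  rw [Subgroup.mem_comap, hsplit]
  exact mul_mem (leftTransvection_mem_elementarySubgroup z (modKernel_mul_le m e hu))
    (rightTransvection_mem_elementarySubgroup z (modKernel_mul_le m e hw))

/-- The restriction to `transvectionGroup (Fin 4) (m * e)` of a character of `elementarySubgroup m`;
for characters of exponent `e` it is inverted by exchanging left and right transvections. -/
def transvectionRestrict (e : ℕ) (χ : elementarySubgroup m →* C) :
    transvectionGroup (Fin 4) (m * e) →* C :=
  χ.comp (Subgroup.inclusion (transvectionGroup_mul_le_elementarySubgroup m e))

theorem apply_partialConj_eq_one (hC : ∀ c : C, c ^ e = 1) (z : Fin 4) {k : F₄}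
    (hk : k ∈ modKernel (Fin 4) (m * e)) :
    χ ⟨partialConj z k, partialConj_mem_elementarySubgroup z k⟩ = 1 := by
  let f : F₄ →* C :=
    χ.comp ((partialConj z).codRestrict _ (partialConj_mem_elementarySubgroup z))
  refine modKernel_le (K := f.ker) (fun i ↦ ?_) (fun i j ↦ ?_) hk <;> rw [MonoidHom.mem_ker]
  · rw [pow_mul, map_pow, hC]
  · rw [map_commutatorElement, commutatorElement_eq_one_iff_commute]
    exact Commute.all _ _

theorem transvectionRestrict_left (hC : ∀ c : C, c ^ e = 1) (z : Fin 4)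
    (k : modKernel (Fin 4) (m * e)) : transvectionRestrict e χ (transvectionIn z (k, 1)) =
      (transvectionRestrict e χ (transvectionIn z (1, k)))⁻¹ := by
  rw [eq_inv_iff_mul_eq_one, mul_comm, ← apply_partialConj_eq_one hC z k.2, ← map_mul]
  exact congrArg χ (Subtype.ext (right_mul_left_eq_partialConj z k))

theorem IsNormalized.apply_rightElementary_mem_zpowers [IsCyclic C] [Finite C]
    (hC : ∀ c : C, c ^ e = 1) {a : C} (h : IsNormalized χ a) (z : Fin 4)
    {k : modKernel (Fin 4) m} (hk : (k : F₄) ∈ modKernel (Fin 4) (m * e)) :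
    χ (rightElementary m z k) ∈ Subgroup.zpowers a := by
  let f := χ.comp (rightElementary m z)
  let K := ((Subgroup.zpowers a).comap f).map (modKernel (Fin 4) m).subtype
  have hnormal : K.Normal := ⟨by
    rintro _ ⟨k, hk, rfl⟩ g
    refine ⟨MulAut.conjNormal g k, ?_, rfl⟩
    have : f (MulAut.conjNormal g k) = f k :=
      DFunLike.congr_fun (conjTwist_comp_rightElementary χ z g) k
    simpa only [SetLike.mem_coe, Subgroup.mem_comap, this] using hk⟩
  have hle : modKernel (Fin 4) (m * e) ≤ K := by
    refine modKernel_le (fun i ↦ ?_) fun i j ↦ ?_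
    · refine ⟨⟨of i ^ m, of_pow_mem_modKernel i⟩ ^ e, ?_, (pow_mul _ _ _).symm⟩
      rw [SetLike.mem_coe, Subgroup.mem_comap, map_pow, hC]
      exact one_mem _
    · exact ⟨⟨⁅of i, of j⁆, commutator_mem_modKernel _ _⟩, h.pairing_mem_zpowers z i j, rfl⟩
  obtain ⟨k', hk', hkk'⟩ := hle hk
  rwa [← Subtype.ext hkk']

theorem IsNormalized.transvectionRestrict_mem_zpowers [IsCyclic C] [Finite C]
    (hC : ∀ c : C, c ^ e = 1) {a : C} (h : IsNormalized χ a)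
    (θ : transvectionGroup (Fin 4) (m * e)) : transvectionRestrict e χ θ ∈ Subgroup.zpowers a := by
  suffices hle : ⊤ ≤ (Subgroup.zpowers a).comap (transvectionRestrict e χ) from
    hle (Subgroup.mem_top θ)
  rw [← iSup_range_transvectionIn]
  refine iSup_le fun z ↦ ?_
  rintro _ ⟨⟨u, w⟩, rfl⟩
  have hright (k : modKernel (Fin 4) (m * e)) :
      transvectionRestrict e χ (transvectionIn z (1, k)) ∈ Subgroup.zpowers a :=
    h.apply_rightElementary_mem_zpowers hC z (k := ⟨k, modKernel_mul_le m e k.2⟩) k.2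
  have hsplit : (u, w) = (u, 1) * (1, w) := by simp
  rw [Subgroup.mem_comap, hsplit, map_mul, map_mul, transvectionRestrict_left hC]
  exact mul_mem (inv_mem (hright u)) (hright w)

/-- The commutator `⁅xᵢ, xⱼ⁆` as an element of `modKernel (Fin 4) N`. -/
def letterCommutator {N : ℕ} (i j : Fin 4) : modKernel (Fin 4) N :=
  ⟨⁅of i, of j⁆, commutator_mem_modKernel _ _⟩

theorem commute_transvectionIn_left_right {ι : Type*} [DecidableEq ι] {N : ℕ} (z : ι)
    (k k' : modKernel ι N) : Commute (transvectionIn z (k, 1)) (transvectionIn z (1, k')) :=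
  (MonoidHom.commute_inl_inr k k').map (transvectionIn z)

/-- The vanishing subgroups of `transvectionRestrict e χ` for the right and left transvections of
`x₀` by `⁅x₂, x₃⁆`. -/
abbrev transvectionVanishing (A : Type*) [CommGroup A] (e : ℕ) (χ : elementarySubgroup m →* C)
    (l : ℕ) : Subgroup (transvectionGroup (Fin 4) (m * e)) :=
  vanishingSubgroup A (transvectionRestrict e χ) (transvectionIn 0 (1, letterCommutator 2 3))
    (transvectionIn 0 (letterCommutator 2 3, 1)) l

variable {A : Type*} [CommGroup A]

theorem right_zero_mem_transvectionVanishing (k : modKernel (Fin 4) (m * e)) :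
    transvectionIn 0 (1, k) ∈ transvectionVanishing A e χ 0 :=
  mem_vanishingSubgroup_zero_of_commute (commute_transvectionIn_left_right 0 _ k)

theorem left_zero_mem_transvectionVanishing (k : modKernel (Fin 4) (m * e)) :
    transvectionIn 0 (k, 1) ∈ transvectionVanishing A e χ 1 :=
  mem_vanishingSubgroup_succ_of_commute (right_zero_mem_transvectionVanishing _) (.inl rfl)
    (commute_transvectionIn_left_right 0 k _)

namespace IsNormalized

variable {a : C}

theorem transvectionRestrict_right_eq_or_eq_inv (h : IsNormalized χ a) {z i j : Fin 4}
    (hi : i ≠ 0) (hj : j ≠ 0) (hij : i ≠ j) (hiz : i ≠ z) (hjz : j ≠ z) :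
    letI X := transvectionRestrict e χ
    letI x := transvectionIn z (1, letterCommutator i j)
    letI y := transvectionIn 0 (1, letterCommutator 2 3)
    X x = X y ∨ X x = (X y)⁻¹ := by
  have hy : transvectionRestrict e χ (transvectionIn 0 (1, letterCommutator 2 3)) = a :=
    h.pairing_eq 0 2 3 (by decide) (by decide) (by decide) (by decide)
  rw [hy]
  exact h.pairing_eq_or_eq_inv hi hj hij hiz hjz

theorem letterCommutator_mem_transvectionVanishing (h : IsNormalized χ a) {z i j : Fin 4}
    (hz : z ≠ 0) (hi : i ≠ 0) (hj : j ≠ 0) (hij : i ≠ j) (hiz : i ≠ z) (hjz : j ≠ z) :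
    transvectionIn z (1, letterCommutator i j) ∈ transvectionVanishing A e χ 1 ∧
      transvectionIn z (letterCommutator i j, 1) ∈ transvectionVanishing A e χ 1 := by
  have hval := h.transvectionRestrict_right_eq_or_eq_inv (e := e) hi hj hij hi hj
  have hkill {l : Fin 4} (hil : i ≠ l) (hjl : j ≠ l) :
      killLetter l ⁅of i, of j⁆ = ⁅of i, of j⁆ := killLetter_commutator hil hjl
  refine ⟨mem_vanishingSubgroup_succ_of_commute (right_zero_mem_transvectionVanishing _) hval ?_,
    mem_vanishingSubgroup_succ_of_commute (right_zero_mem_transvectionVanishing _) hval ?_⟩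
  · exact Subtype.ext (commute_transvection hz.symm (by simp) (hkill hi hj) (by simp)
      (hkill hiz hjz))
  · exact Subtype.ext (commute_transvection hz.symm (hkill hi hj) (by simp) (by simp)
      (hkill hiz hjz))

theorem transvectionVanishing_two_eq_top (hC : ∀ c : C, c ^ e = 1) (h : IsNormalized χ a) :
    transvectionVanishing A e χ 2 = ⊤ := by
  have hone (z : Fin 4) (k : modKernel (Fin 4) (m * e)) :
      transvectionIn z (1, k) ∈ transvectionVanishing A e χ 2 ∧
        transvectionIn z (k, 1) ∈ transvectionVanishing A e χ 2 := by
    by_cases hz : z = 0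
    · subst hz
      exact ⟨vanishingSubgroup_le_succ (vanishingSubgroup_le_succ
        (right_zero_mem_transvectionVanishing k)),
        vanishingSubgroup_le_succ (left_zero_mem_transvectionVanishing k)⟩
    have hletters : ∀ z : Fin 4, ∃ i j, i ≠ 0 ∧ j ≠ 0 ∧ i ≠ j ∧ i ≠ z ∧ j ≠ z := by decide
    obtain ⟨i, j, hi, hj, hij, hiz, hjz⟩ := hletters z
    obtain ⟨hright, hleft⟩ := h.letterCommutator_mem_transvectionVanishing (A := A) (e := e)
      hz hi hj hij hiz hjz
    have hval := h.transvectionRestrict_right_eq_or_eq_inv (e := e) hi hj hij hiz hjz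
    refine ⟨mem_vanishingSubgroup_succ_of_commute hleft ?_
        (commute_transvectionIn_left_right z _ k).symm,
      mem_vanishingSubgroup_succ_of_commute hright hval
        (commute_transvectionIn_left_right z k _)⟩
    rwa [transvectionRestrict_left hC, inv_inj, inv_eq_iff_eq_inv, or_comm]
  rw [eq_top_iff, ← iSup_range_transvectionIn]
  refine iSup_le fun z ↦ ?_
  rintro _ ⟨⟨u, w⟩, rfl⟩
  have hsplit : (u, w) = (u, 1) * (1, w) := by simp
  rw [hsplit, map_mul]
  exact mul_mem (hone z u).2 (hone z w).1

theorem subsingleton_ker_transvectionRestrict_hom [IsCyclic C] [Finite C] [IsMulTorsionFree A]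
    (hm : m ≠ 0) (he : e ≠ 0) (hC : ∀ c : C, c ^ e = 1) (h : IsNormalized χ a) :
    Subsingleton ((transvectionRestrict e χ).ker →* A) := by
  have := subsingleton_transvectionGroup_hom (A := A) (mul_ne_zero hm he)
  have hy : transvectionRestrict e χ (transvectionIn 0 (1, letterCommutator 2 3)) = a :=
    h.pairing_eq 0 2 3 (by decide) (by decide) (by decide) (by decide)
  refine subsingleton_ker_hom (hy ▸ h.transvectionRestrict_mem_zpowers hC)
    (transvectionRestrict_left hC 0 (letterCommutator 2 3)) (h.transvectionVanishing_two_eq_top hC)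

end IsNormalized

theorem exists_ker_transvectionRestrict_ne_one (hm : m ≠ 0) (he : e ≠ 0)
    (hC : ∀ c : C, c ^ e = 1) (χ : elementarySubgroup m →* C) :
    ∃ g : (transvectionRestrict e χ).ker, g ≠ 1 := by
  let k : modKernel (Fin 4) (m * e) := ⟨of 1 ^ (m * e), of_pow_mem_modKernel 1⟩
  have hker : transvectionIn 0 (1, k) ^ e ∈ (transvectionRestrict e χ).ker := by
    rw [MonoidHom.mem_ker, map_pow, hC]
  refine ⟨⟨_, hker⟩, fun h ↦ ?_⟩
  have hone : (rightTransvection 0 (of 1 ^ (m * e)) ^ e : MulAut F₄) (of 0) = of 0 :=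
    congrArg (fun g : (transvectionRestrict e χ).ker ↦ (g : MulAut F₄) (of 0)) h
  let f : F₄ →* Multiplicative ℤ :=
    FreeGroup.lift fun i ↦ if i = 1 then Multiplicative.ofAdd 1 else 1
  have hf : (m * e : ℤ) * e = 0 := by
    rw [← map_pow, rightTransvection_of_self] at hone
    simpa [f, killLetter_of_ne] using congrArg f hone
  simp_all

theorem exists_fg_subgroup_le_ker (hm : m ≠ 0) (he : e ≠ 0)
    (χ : elementarySubgroup m →* Multiplicative (ZMod e)) :
    ∃ Γ ≤ χ.ker, Group.FG Γ ∧ Γ ≠ ⊥ ∧ Subsingleton (Γ →* Multiplicative ℝ) := by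
  have : NeZero e := ⟨he⟩
  have : NeZero (m * e) := ⟨mul_ne_zero hm he⟩
  have hC (c : Multiplicative (ZMod e)) : c ^ e = 1 :=
    Multiplicative.toAdd.injective (by simp)
  obtain ⟨g, a, h⟩ := exists_isNormalized χ
  let X := transvectionRestrict e (conjTwist g χ)
  let j : X.ker →* elementarySubgroup m :=
    (MulAut.conjNormal g).toMonoidHom.comp
      ((Subgroup.inclusion (transvectionGroup_mul_le_elementarySubgroup m e)).comp X.ker.subtype)
  have hj : Function.Injective j := (MulAut.conjNormal g).injective.comp
    ((Subgroup.inclusion_injective (transvectionGroup_mul_le_elementarySubgroup m e)).comp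
      X.ker.subtype_injective)
  have hfg : Group.FG X.ker := Subgroup.fg_of_index_ne_zero _
  have hhom : Subsingleton (X.ker →* Multiplicative ℝ) :=
    h.subsingleton_ker_transvectionRestrict_hom hm he hC
  obtain ⟨k, hk⟩ := exists_ker_transvectionRestrict_ne_one hm he hC (conjTwist g χ)
  refine ⟨j.range, ?_, Group.fg_range j, fun hbot ↦ hk ?_, ⟨fun φ ψ ↦ ?_⟩⟩
  · rintro _ ⟨k, rfl⟩
    exact k.2
  · rw [MonoidHom.range_eq_bot_iff.1 hbot] at hj
    exact hj rfl
  · exact (MonoidHom.cancel_right j.rangeRestrict_surjective).1 (Subsingleton.elim _ _)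

end TransvectionKernel

section RotationNumbers

open FreeGroup (of)

theorem hasTorsionRotationNumber_of_equivariant {G V : Type*} [Group G] [Group V]
    {K : Subgroup V} [K.Normal] {ρ : G →* Equiv.Perm 𝕊} (hρ : ∀ g, IsOPHomeo (ρ g))
    {M : K →* G} {b c : G} {θ : V →* V} {x : V} {u : K} {m : ℕ}
    (hc : ∀ w, c * M w * c⁻¹ = M (MulAut.conjNormal x w))
    (hb : ∀ w w' : K, (w' : V) = θ w → b * M w * b⁻¹ = M w')
    (hθx : θ x = x * u) (hθu : θ u = u) (hx : x ^ m ∈ K) :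
    HasTorsionRotationNumber m (ρ (M u)) := by
  let k (i : ℕ) : K := MulAut.conjNormal (x ^ (i + 1)) u
  let p (i : ℕ) : K := ((List.range i).map k).prod
  have hp (i : ℕ) : p i * x ^ i = (x * u) ^ i := by
    rw [← prod_map_pow_mul_conj_mul_pow, ← Subgroup.subtype_apply, map_list_prod, List.map_map]
    rfl
  have hprod (i : ℕ) : ((List.range i).map fun i ↦ M (k i)).prod = M (p i) := by
    rw [map_list_prod, List.map_map]
    rfl
  have hconj (i : ℕ) (w : K) : c ^ i * M w * (c ^ i)⁻¹ = M (MulAut.conjNormal (x ^ i) w) := by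
    induction i with
    | zero => simp
    | succ i ih =>
      rw [pow_succ' x, map_mul, MulAut.mul_apply, ← hc, ← ih, pow_succ']
      group
  refine hasTorsionRotationNumber_of_relations hρ (T := fun i ↦ M (k i)) (b := b)
    (a := M ⟨x ^ m, hx⟩) (fun i ↦ isConj_iff.2 ⟨c ^ (i + 1), hconj (i + 1) u⟩) (fun i ↦ ?_) ?_
  · rw [hprod, ← map_mul, ← map_inv, ← map_mul]
    refine hb _ _ ?_
    have hk : (k i : V) = x ^ (i + 1) * u * (x ^ (i + 1))⁻¹ := MulAut.conjNormal_apply _ _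
    simp only [Subgroup.coe_mul, Subgroup.coe_inv, hk, eq_mul_inv_of_mul_eq (hp i), map_mul,
      map_inv, map_pow, hθx, hθu, pow_succ]
    generalize (x * (u : V)) ^ i = q
    group
  · rw [hprod, ← map_mul]
    refine hb _ _ ?_
    rw [map_pow, hθx]
    exact hp m

variable {m : ℕ}

/-- `leftTransvection z` as a homomorphism into `elementarySubgroup m`. -/
def leftElementary (m : ℕ) (z : Fin 4) : modKernel (Fin 4) m →* elementarySubgroup m :=
  ((leftTransvection z).comp (modKernel (Fin 4) m).subtype).codRestrict _ fun k ↦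
    leftTransvection_mem_elementarySubgroup z k.2

variable {ρ : elementarySubgroup m →* Equiv.Perm 𝕊}

theorem hasTorsionRotationNumber_elementary (hρ : ∀ g, IsOPHomeo (ρ g)) {z l : Fin 4} (hl : l ≠ z)
    {u : modKernel (Fin 4) m} (hz : killLetter z u = u) (hlu : killLetter l u = u) :
    HasTorsionRotationNumber m (ρ (rightElementary m z u)) ∧
      HasTorsionRotationNumber m (ρ (leftElementary m z u)) := by
  let c : elementarySubgroup m := ⟨conjOthers z (of l), conjOthers_mem_elementarySubgroup z _⟩
  have hθl : rightTransvection l u (of l) = of l * u := by rw [rightTransvection_of_self, hlu]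
  have hθu : rightTransvection l (u : F₄) u = u := transvection_apply_of_killLetter_eq hlu _
  constructor
  · refine hasTorsionRotationNumber_of_equivariant hρ (c := c) (b := rightElementary m l u)
      (θ := (rightTransvection l u).toMonoidHom) (x := of l) (fun w ↦ Subtype.ext ?_)
      (fun w w' hw ↦ Subtype.ext ?_) hθl hθu (of_pow_mem_modKernel l)
    · exact conjOthers_mul_rightTransvection_mul_inv z _ _
    · exact (rightTransvection_mul_rightTransvection_mul_inv hl.symm hz _).trans
        (congrArg (rightTransvection z) hw.symm)
  · refine hasTorsionRotationNumber_of_equivariant hρ (c := c) (b := rightElementary m l u)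
      (θ := (rightTransvection l u).toMonoidHom) (x := of l) (fun w ↦ Subtype.ext ?_)
      (fun w w' hw ↦ Subtype.ext ?_) hθl hθu (of_pow_mem_modKernel l)
    · exact (conjOthers_mul_transvection_mul_inv z (of l) (w, 1)).trans
        (congrArg (transvection z) (Prod.ext rfl (by simp)))
    · exact (transvection_mul_transvection_mul_inv hl.symm (map_one _) hz (w, 1)).trans
        (congrArg (transvection z) (Prod.ext hw.symm (map_one _)))

theorem hasTorsionRotationNumber_of_mem_elementaryGenerators (hρ : ∀ g, IsOPHomeo (ρ g))
    {g : elementarySubgroup m} (hg : (g : MulAut F₄) ∈ elementaryGenerators m) :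
    HasTorsionRotationNumber (m * m) (ρ g) := by
  have hletter : ∀ z i j : Fin 4, ∃ l, l ≠ z ∧ i ≠ l ∧ j ≠ l := by decide
  have hpow {z i l : Fin 4} (hlz : l ≠ z) (hiz : i ≠ z) (hil : i ≠ l) :=
    hasTorsionRotationNumber_elementary hρ hlz (u := ⟨_, of_pow_mem_modKernel i⟩)
      (killLetter_of_pow hiz m) (killLetter_of_pow hil m)
  obtain ⟨g, hmem⟩ := g
  rcases hg with ⟨z, i, hi, rfl⟩ | ⟨z, i, j, hi, hj, -, rfl⟩ | ⟨z, i, hi, rfl⟩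
  · obtain ⟨l, hlz, hil, -⟩ := hletter z i i
    exact (hpow hlz hi hil).1.mul_left m
  · obtain ⟨l, hlz, hil, hjl⟩ := hletter z i j
    exact (hasTorsionRotationNumber_elementary hρ hlz
      (u := ⟨_, commutator_mem_modKernel (of i) (of j)⟩) (killLetter_commutator hi hj)
      (killLetter_commutator hil hjl)).1.mul_left m
  · obtain ⟨l, hlz, hil, -⟩ := hletter z i i
    obtain ⟨hright, hleft⟩ := hpow hlz hi hil
    refine hasTorsionRotationNumber_of_pow_eq_mul hρ ?_ ?_ hright hleft
    · exact Subtype.ext (commute_left_right z _ _).symm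
    · refine Subtype.ext ?_
      exact (map_pow (partialConj z) (of i) m).symm.trans (right_mul_left_eq_partialConj z _).symm

/-- The conjugates in `Aut(F₄)` of the normal generators of `elementarySubgroup m`. -/
def elementaryConjugates (m : ℕ) : Set (elementarySubgroup m) :=
  (↑) ⁻¹' Group.conjugatesOfSet (elementaryGenerators m)

theorem closure_elementaryConjugates : Subgroup.closure (elementaryConjugates m) = ⊤ :=
  Subgroup.closure_closure_coe_preimage

theorem hasTorsionRotationNumber_of_mem_elementaryConjugates (hρ : ∀ g, IsOPHomeo (ρ g))
    {s : elementarySubgroup m} (hs : s ∈ elementaryConjugates m) :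
    HasTorsionRotationNumber (m * m) (ρ s) := by
  obtain ⟨g, hg, hgs⟩ := Group.mem_conjugatesOfSet_iff.1 hs
  obtain ⟨γ, hγ⟩ := isConj_iff.1 hgs
  have hsg : MulAut.conjNormal γ ⟨g, Subgroup.subset_normalClosure hg⟩ = s := Subtype.ext hγ
  rw [← hsg]
  exact hasTorsionRotationNumber_of_mem_elementaryGenerators
    (ρ := ρ.comp (MulAut.conjNormal γ).toMonoidHom) (g := ⟨g, _⟩) (fun _ ↦ hρ _) hg

end RotationNumbers

/-! ### Automorphisms acting on a block of letters -/

section BlockExtension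

open FreeGroup (of)

variable {ι κ : Type*} {f : ι ↪ κ}

theorem freeGroup_hom_ext_of_range {G : Type*} [Group G] {φ ψ : FreeGroup κ →* G}
    (h : ∀ w, φ (FreeGroup.map f w) = ψ (FreeGroup.map f w))
    (h' : ∀ j ∉ Set.range f, φ (of j) = ψ (of j)) : φ = ψ := by
  refine FreeGroup.ext_hom _ _ fun j ↦ ?_
  by_cases hj : j ∈ Set.range f
  · obtain ⟨i, rfl⟩ := hj
    simpa using h (of i)
  · exact h' j hj

variable (f) in
/-- The endomorphism of `FreeGroup κ` which acts as `θ` on the letters in the image of `f` and fixes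
all other letters. -/
def blockEnd (θ : MulAut (FreeGroup ι)) : FreeGroup κ →* FreeGroup κ :=
  FreeGroup.lift (Function.extend f (fun i ↦ FreeGroup.map f (θ (of i))) of)

theorem blockEnd_of_notMem_range (θ : MulAut (FreeGroup ι)) {j : κ} (hj : j ∉ Set.range f) :
    blockEnd f θ (of j) = of j := by
  rw [blockEnd, FreeGroup.lift_apply_of, Function.extend_apply' _ _ _ hj]

theorem blockEnd_map (θ : MulAut (FreeGroup ι)) (w : FreeGroup ι) :
    blockEnd f θ (FreeGroup.map f w) = FreeGroup.map f (θ w) := by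
  suffices (blockEnd f θ).comp (FreeGroup.map f) = (FreeGroup.map f).comp θ.toMonoidHom from
    DFunLike.congr_fun this w
  ext i
  simp [blockEnd, f.injective.extend_apply]

theorem blockEnd_one : blockEnd f 1 = MonoidHom.id _ :=
  freeGroup_hom_ext_of_range (f := f) (blockEnd_map 1) fun _ ↦ blockEnd_of_notMem_range 1

theorem blockEnd_mul (θ φ : MulAut (FreeGroup ι)) :
    blockEnd f (θ * φ) = (blockEnd f θ).comp (blockEnd f φ) := by
  refine freeGroup_hom_ext_of_range (f := f) (fun w ↦ ?_) fun j hj ↦ ?_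
  · simp [blockEnd_map]
  · simp [blockEnd_of_notMem_range _ hj]

variable (f) in
/-- The extension of automorphisms of `FreeGroup ι` along an embedding of letters, fixing the
letters outside the image. -/
def blockExtension : MulAut (FreeGroup ι) →* MulAut (FreeGroup κ) where
  toFun θ := (blockEnd f θ).toMulEquiv (blockEnd f θ⁻¹)
    (by rw [← blockEnd_mul, inv_mul_cancel, blockEnd_one])
    (by rw [← blockEnd_mul, mul_inv_cancel, blockEnd_one])
  map_one' := MulEquiv.ext fun w ↦ DFunLike.congr_fun blockEnd_one w
  map_mul' θ φ := MulEquiv.ext fun w ↦ DFunLike.congr_fun (blockEnd_mul θ φ) w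

theorem blockExtension_map (θ : MulAut (FreeGroup ι)) (w : FreeGroup ι) :
    blockExtension f θ (FreeGroup.map f w) = FreeGroup.map f (θ w) :=
  blockEnd_map θ w

theorem blockExtension_of_notMem_range (θ : MulAut (FreeGroup ι)) {j : κ} (hj : j ∉ Set.range f) :
    blockExtension f θ (of j) = of j :=
  blockEnd_of_notMem_range θ hj

theorem blockExtension_injective : Function.Injective (blockExtension f) := fun θ φ h ↦
  MulEquiv.ext fun w ↦ FreeGroup.map_injective f.injective <| by
    rw [← blockExtension_map, h, blockExtension_map]

theorem blockExtension_map_of_disjoint {ι' : Type*} {f' : ι' ↪ κ}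
    (h : Disjoint (Set.range f) (Set.range f')) (θ : MulAut (FreeGroup ι)) (w : FreeGroup ι') :
    blockExtension f θ (FreeGroup.map f' w) = FreeGroup.map f' w := by
  suffices (blockExtension f θ).toMonoidHom.comp (FreeGroup.map f') = FreeGroup.map f' from
    DFunLike.congr_fun this w
  refine FreeGroup.ext_hom _ _ fun i ↦ ?_
  simpa using blockExtension_of_notMem_range θ (h.notMem_of_mem_right (Set.mem_range_self i))

theorem commute_blockExtension {ι' : Type*} {f' : ι' ↪ κ}
    (h : Disjoint (Set.range f) (Set.range f')) (θ : MulAut (FreeGroup ι))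
    (θ' : MulAut (FreeGroup ι')) : Commute (blockExtension f θ) (blockExtension f' θ') := by
  suffices (blockExtension f θ * blockExtension f' θ').toMonoidHom =
      (blockExtension f' θ' * blockExtension f θ).toMonoidHom from
    MulEquiv.ext fun w ↦ DFunLike.congr_fun this w
  refine freeGroup_hom_ext_of_range (f := f) (fun w ↦ ?_) fun j hj ↦ ?_
  · simp [blockExtension_map, blockExtension_map_of_disjoint h.symm]
  · by_cases hj' : j ∈ Set.range f'
    · obtain ⟨i, rfl⟩ := hj'
      have hi : (of (f' i) : FreeGroup κ) = FreeGroup.map f' (of i) := FreeGroup.map.of.symm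
      simp [hi, blockExtension_map, blockExtension_map_of_disjoint h, -FreeGroup.map.of]
    · simp [blockExtension_of_notMem_range _ hj, blockExtension_of_notMem_range _ hj']

end BlockExtension

section BlockEmbedding

variable {m n : ℕ}

theorem apply_apply_of_mem_elementaryGenerators {A : Type*} [CommGroup A]
    (hA : ∀ a : A, a ^ m = 1) {θ : MulAut F₄} (hθ : θ ∈ elementaryGenerators m) (f : F₄ →* A)
    (w : F₄) : f (θ w) = f w := by
  suffices f.comp θ.toMonoidHom = f from DFunLike.congr_fun this w
  have htransvection (z : Fin 4) {u w : F₄} (h : f (killLetter z u) = f (killLetter z w)) :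
      f.comp (transvection z (u, w)).toMonoidHom = f := by
    refine FreeGroup.ext_hom _ _ fun j ↦ ?_
    by_cases hj : j = z
    · subst hj
      simp [transvection_of_self, h]
    · simp [transvection_of_ne hj]
  rcases hθ with ⟨z, i, hi, rfl⟩ | ⟨z, i, j, -, -, -, rfl⟩ | ⟨z, i, -, rfl⟩
  · refine htransvection z ?_
    simp [killLetter_of_ne hi, hA]
  · refine htransvection z ?_
    rw [map_one, map_one, map_commutatorElement, map_commutatorElement]
    exact (commutatorElement_eq_one_iff_commute.2 (Commute.all _ _)).symm
  · exact htransvection z rfl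

theorem apply_apply_of_mem_elementarySubgroup {A : Type*} [CommGroup A]
    (hA : ∀ a : A, a ^ m = 1) {θ : MulAut F₄} (hθ : θ ∈ elementarySubgroup m) (f : F₄ →* A)
    (w : F₄) : f (θ w) = f w := by
  induction hθ using Subgroup.closure_induction generalizing w with
  | mem θ hθ =>
    obtain ⟨g, hg, hgθ⟩ := Group.mem_conjugatesOfSet_iff.1 hθ
    obtain ⟨γ, rfl⟩ := isConj_iff.1 hgθ
    simpa using apply_apply_of_mem_elementaryGenerators hA hg (f.comp γ.toMonoidHom) (γ⁻¹ w)
  | one => rfl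
  | mul θ φ _ _ hθ hφ => exact (hθ _).trans (hφ w)
  | inv θ _ hθ => simpa using (hθ (θ⁻¹ w)).symm

theorem blockExtension_mem_autCongr (ι : Fin 4 ↪ Fin n) {θ : MulAut F₄}
    (hθ : θ ∈ elementarySubgroup m) : blockExtension ι θ ∈ AutCongr n m := by
  refine DFunLike.congr_fun (f := (modMProj n m).comp (blockExtension ι θ).toMonoidHom) ?_
  have hexp (a : Multiplicative (Fin n → ZMod m)) : a ^ m = 1 :=
    Multiplicative.toAdd.injective (by ext; simp)
  refine freeGroup_hom_ext_of_range (f := ι) (fun w ↦ ?_) fun j hj ↦ ?_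
  · simpa [blockExtension_map] using
      apply_apply_of_mem_elementarySubgroup hexp hθ ((modMProj n m).comp (FreeGroup.map ι)) w
  · simp [blockExtension_of_notMem_range θ hj]

/-- The embedding of `elementarySubgroup m` into the congruence subgroup of `Aut(Fₙ)` through the
letters in the image of `ι`. -/
def blockEmbedding (ι : Fin 4 ↪ Fin n) (m : ℕ) : elementarySubgroup m →* AutCongr n m :=
  ((blockExtension ι).comp (elementarySubgroup m).subtype).codRestrict _ fun θ ↦
    blockExtension_mem_autCongr ι θ.2

theorem blockEmbedding_injective (ι : Fin 4 ↪ Fin n) : Function.Injective (blockEmbedding ι m) :=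
  fun _ _ h ↦ Subtype.ext (blockExtension_injective (congrArg Subtype.val h))

theorem commute_blockEmbedding {ι ι' : Fin 4 ↪ Fin n}
    (h : Disjoint (Set.range ι) (Set.range ι')) (θ θ' : elementarySubgroup m) :
    Commute (blockEmbedding ι m θ) (blockEmbedding ι' m θ') :=
  Subtype.ext (commute_blockExtension h θ.1 θ'.1).eq

end BlockEmbedding

theorem not_injective_of_ker_fixed {m e : ℕ} (hm : 0 < m) (he : 0 < e)
    {ρ : elementarySubgroup m →* Equiv.Perm 𝕊} (hρ : ∀ g, IsC1Diffeo (ρ g))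
    {χ : elementarySubgroup m →* Multiplicative (ZMod e)} {x : ℝ}
    (hx : ∀ s, χ s = 1 → ρ s (x : 𝕊) = x) : ¬ Function.Injective ρ := by
  intro hinj
  obtain ⟨Γ, hΓχ, _, hΓ, _⟩ := exists_fg_subgroup_le_ker hm.ne' he.ne' χ
  have htrivial : ρ.comp Γ.subtype = 1 :=
    eq_one_of_isC1Diffeo_of_fixed (fun g ↦ hρ g) fun g ↦ hx g (hΓχ g.2)
  refine hΓ ((Subgroup.eq_bot_iff_forall Γ).2 fun g hg ↦ hinj ?_)
  simpa using DFunLike.congr_fun htrivial ⟨g, hg⟩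

/-- For `n ≥ 8` and `m ≥ 2`, any orientation preserving `C¹` action of
the level `m` congruence subgroup `Aut(Fₙ, m)` on the circle cannot be faithful. -/
theorem congruence_subgroup_action_not_faithful
    (n m : ℕ) (hn : 8 ≤ n) (hm : 2 ≤ m)
    (ρ : (AutCongr n m) →* Equiv.Perm 𝕊) (hρ : ∀ g : AutCongr n m, IsC1Diffeo (ρ g)) :
    ¬ Function.Injective ρ := by
  intro hinj
  have hm₀ : 0 < m := by omega
  let ι₁ : Fin 4 ↪ Fin n := Fin.castLEEmb (by omega)
  let ι₂ : Fin 4 ↪ Fin n := (Fin.natAddEmb 4).trans (Fin.castLEEmb hn)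
  have hdisj : Disjoint (Set.range ι₁) (Set.range ι₂) :=
    Set.disjoint_range_iff.2 fun i j h ↦ by
      have : (i : ℕ) = 4 + j := congrArg Fin.val h
      omega
  have hC1 (ι : Fin 4 ↪ Fin n) (s) : IsC1Diffeo (ρ.comp (blockEmbedding ι m) s) := hρ _
  have hhomeo (ι : Fin 4 ↪ Fin n) (s) := (hC1 ι s).isOPHomeo
  obtain ⟨χ, x, hx | hx⟩ := exists_character_of_commuting_actions (hhomeo ι₁) (hhomeo ι₂)
    (fun s t ↦ (commute_blockEmbedding hdisj s t).map ρ) closure_elementaryConjugates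
    (Nat.mul_pos hm₀ hm₀)
    (fun _ ↦ hasTorsionRotationNumber_of_mem_elementaryConjugates (hhomeo ι₁))
    (fun _ ↦ hasTorsionRotationNumber_of_mem_elementaryConjugates (hhomeo ι₂))
  · exact not_injective_of_ker_fixed hm₀ (Nat.mul_pos hm₀ hm₀) (hC1 ι₁) hx
      (hinj.comp (blockEmbedding_injective ι₁))
  · exact not_injective_of_ker_fixed hm₀ (Nat.mul_pos hm₀ hm₀) (hC1 ι₂) hx
      (hinj.comp (blockEmbedding_injective ι₂))
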